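/- For every k∈ℕ, the k-stratified state reachability problem for DCPSs is decidable: for every DCPS M=(Q,Γ,Δ,q₀,γ₀) and every set F⊆Q, it is decidable whether there exists a state q∈F that is k-stratified reachable by M. -/

import Mathlib

namespace DCPSFormal

/-- Rules of a dynamic network of concurrent pushdown systems (DCPS):
creation rules `⟨q,γ⟩ → ⟨q',u⟩ ▷ α` (with `α = none` meaning `ε`),
interruption rules `⟨q,γ⟩ ↦ ⟨q',u⟩`, and resumption rules `q ↦ q' ◁ γ`. -/
inductive Rule (Q Γ : Type*) where
  | cr : Q → Γ → Q → List Γ → Option Γ → Rule Q Γ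
  | intr : Q → Γ → Q → List Γ → Rule Q Γ
  | res : Q → Γ → Q → Rule Q Γ

/-- A DCPS: a set of rules, an initial state and an initial stack symbol. -/
structure DCPS (Q Γ : Type*) where
  rules : Set (Rule Q Γ)
  q0 : Q
  γ0 : Γ

/-- Well-formedness of a DCPS: every pushed word has length at most 2. -/
def IsDCPSWf {Q Γ : Type*} (M : DCPS Q Γ) : Prop :=
  ∀ r ∈ M.rules,
    match r with
    | .cr _ _ _ u _ => u.length ≤ 2
    | .intr _ _ _ u => u.length ≤ 2
    | .res _ _ _ => True

/-- A DCFS is a DCPS in which every pushed word has length at most 1. -/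
def IsDCFS {Q Γ : Type*} (M : DCPS Q Γ) : Prop :=
  ∀ r ∈ M.rules,
    match r with
    | .cr _ _ _ u _ => u.length ≤ 1
    | .intr _ _ _ u => u.length ≤ 1
    | .res _ _ _ => True

/-- A configuration of a DCPS: global state, optional active local configuration
(stack content and switch number), and a finitely supported multiset of pending
local configurations. -/
structure Config (Q Γ : Type*) where
  state : Q
  active : Option (List Γ × ℕ)
  idle : (List Γ × ℕ) →₀ ℕ

/-- The thread possibly spawned by a creation rule with creation component `α`
when the active thread has switch number `i`. -/
noncomputable def spawnOf {Γ : Type*} (α : Option Γ) (i : ℕ) : (List Γ × ℕ) →₀ ℕ :=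
  match α with
  | none => 0
  | some a => Finsupp.single ([a], i + 1) 1

/-- The transition system `T(M)` of a DCPS, with steps labelled by rules. -/
inductive Step {Q Γ : Type*} (M : DCPS Q Γ) : Rule Q Γ → Config Q Γ → Config Q Γ → Prop
  | cr {q γ q' u α w i V} :
      Rule.cr q γ q' u α ∈ M.rules →
      Step M (.cr q γ q' u α) ⟨q, some (γ :: w, i), V⟩ ⟨q', some (u ++ w, i), V + spawnOf α i⟩
  | intr {q γ q' u w i V} :
      Rule.intr q γ q' u ∈ M.rules →
      Step M (.intr q γ q' u) ⟨q, some (γ :: w, i), V⟩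
        ⟨q', none, V + Finsupp.single (u ++ w, i + 1) 1⟩
  | res {q γ q' w i V} :
      Rule.res q γ q' ∈ M.rules →
      Step M (.res q γ q') ⟨q, none, V + Finsupp.single (γ :: w, i) 1⟩ ⟨q', some (γ :: w, i), V⟩

/-- `c ∈ Conf_I(M)`: the active thread exists and its switch number lies in `I`. -/
def ActiveIn {Q Γ : Type*} (I : Set ℕ) (c : Config Q Γ) : Prop :=
  ∃ w i, c.active = some (w, i) ∧ i ∈ I

/-- The `I`-bounded transition system `T_I(M)`. -/
def StepIn {Q Γ : Type*} (M : DCPS Q Γ) (I : Set ℕ) (r : Rule Q Γ) (c c' : Config Q Γ) : Prop :=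
  Step M r c c' ∧ (ActiveIn I c ∨ ActiveIn I c')

/-- Reachability in `T(M)`. -/
def Reaches {Q Γ : Type*} (M : DCPS Q Γ) : Config Q Γ → Config Q Γ → Prop :=
  Relation.ReflTransGen (fun a b => ∃ r, Step M r a b)

/-- Reachability in `T_I(M)`. -/
def ReachesIn {Q Γ : Type*} (M : DCPS Q Γ) (I : Set ℕ) : Config Q Γ → Config Q Γ → Prop :=
  Relation.ReflTransGen (fun a b => ∃ r, StepIn M I r a b)

/-- The initial configuration of a DCPS. -/
noncomputable def initConfig {Q Γ : Type*} (M : DCPS Q Γ) : Config Q Γ :=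
  ⟨M.q0, none, Finsupp.single ([M.γ0], 0) 1⟩

/-- `q` is reachable by `M`. -/
def StateReachable {Q Γ : Type*} (M : DCPS Q Γ) (q : Q) : Prop :=
  ∃ c, Reaches M (initConfig M) c ∧ c.active = none ∧ c.state = q

/-- `q` is `k`-bounded reachable by `M`. -/
def KBoundedReachable {Q Γ : Type*} (M : DCPS Q Γ) (k : ℕ) (q : Q) : Prop :=
  ∃ c, ReachesIn M {i | i ≤ k} (initConfig M) c ∧ c.active = none ∧ c.state = q

/-- `q` is `k`-stratified reachable by `M`. -/
def KStratifiedReachable {Q Γ : Type*} (M : DCPS Q Γ) (k : ℕ) (q : Q) : Prop :=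
  ∃ c : ℕ → Config Q Γ, c 0 = initConfig M ∧
    (∀ l ≤ k, ReachesIn M {l} (c l) (c (l + 1))) ∧
    (c (k + 1)).active = none ∧ (c (k + 1)).state = q

/-- A labelled run in a labelled transition system. -/
inductive LRun {C L : Type*} (step : L → C → C → Prop) : List L → C → C → Prop
  | nil (c) : LRun step [] c c
  | cons {l τ c c' c''} : step l c c' → LRun step τ c' c'' → LRun step (l :: τ) c c''

/-- A pushdown automaton with states `S`, input alphabet `A` and stack alphabet `Γ`. -/
structure PDA (S A Γ : Type*) where
  trans : Set ((S × Γ) × Option A × (S × List Γ))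
  p0 : S
  γ0 : Γ
  final : Set S

/-- A single (possibly `ε`-labelled) step of a PDA. -/
inductive PDAStep {S A Γ : Type*} (P : PDA S A Γ) :
    Option A → (S × List Γ) → (S × List Γ) → Prop
  | mk {p γ a p' u w} : ((p, γ), a, (p', u)) ∈ P.trans →
      PDAStep P a (p, γ :: w) (p', u ++ w)

/-- A run of a PDA labelled by the word obtained by concatenating all non-`ε` labels. -/
inductive PDATrace {S A Γ : Type*} (P : PDA S A Γ) :
    List A → (S × List Γ) → (S × List Γ) → Prop
  | nil (c) : PDATrace P [] c c
  | eps {v c c' c''} : PDAStep P none c c' → PDATrace P v c' c'' → PDATrace P v c c''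
  | cons {a v c c' c''} : PDAStep P (some a) c c' → PDATrace P v c' c'' →
      PDATrace P (a :: v) c c''

/-- The language of a PDA (acceptance by final state). -/
def PDALang {S A Γ : Type*} (P : PDA S A Γ) : Set (List A) :=
  { v | ∃ p w, p ∈ P.final ∧ PDATrace P v (P.p0, [P.γ0]) (p, w) }

/-- A finite state automaton. -/
structure FSA (S A : Type*) where
  trans : Set (S × Option A × S)
  init : Set S
  final : Set S

/-- A run of an FSA labelled by a word (`ε`-labels contribute nothing). -/
inductive FSARun {S A : Type*} (Au : FSA S A) : List A → S → S → Prop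
  | nil (s) : FSARun Au [] s s
  | eps {v s s' s''} : (s, none, s') ∈ Au.trans → FSARun Au v s' s'' → FSARun Au v s s''
  | cons {a v s s' s''} : (s, some a, s') ∈ Au.trans → FSARun Au v s' s'' →
      FSARun Au (a :: v) s s''

/-- The language of an FSA. -/
def FSALang {S A : Type*} (Au : FSA S A) : Set (List A) :=
  { v | ∃ s ∈ Au.init, ∃ s' ∈ Au.final, FSARun Au v s s' }

/-- A vector addition system with states of dimension `n`. -/
structure VASS (n : ℕ) (S A : Type*) where
  δ : S → A → S × (Fin n → ℤ)
  s0 : S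
  v0 : Fin n → ℕ

/-- A step of a VASS: `(q₁,u₁) →ᵃ (q₂,u₂)` iff `δ(q₁,a) = (q₂, u₂ - u₁)`. -/
def VStep {n : ℕ} {S A : Type*} (V : VASS n S A) (a : A) :
    (S × (Fin n → ℕ)) → (S × (Fin n → ℕ)) → Prop :=
  fun c c' => (V.δ c.1 a).1 = c'.1 ∧ ∀ i, (c'.2 i : ℤ) = (c.2 i : ℤ) + (V.δ c.1 a).2 i

/-- Reachability in the transition system of a VASS. -/
def VReaches {n : ℕ} {S A : Type*} (V : VASS n S A) :
    (S × (Fin n → ℕ)) → (S × (Fin n → ℕ)) → Prop :=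
  Relation.ReflTransGen (fun c c' => ∃ a, VStep V a c c')

/-- A state `s` is reachable by the VASS `V`. -/
def VStateReachable {n : ℕ} {S A : Type*} (V : VASS n S A) (s : S) : Prop :=
  ∃ u, VReaches V (V.s0, V.v0) (s, u)

/-- The `i`-th unit vector. -/
def unitVec {m : ℕ} (i : Fin m) : Fin m → ℤ := fun j => if j = i then 1 else 0

/-- Encoded rules of a DCPS over natural-number states and stack symbols:
`inl` encodes a creation rule, `inr (inl _)` an interruption rule, and
`inr (inr _)` a resumption rule. -/
abbrev RuleE := ((ℕ × ℕ) × (ℕ × List ℕ) × Option ℕ) ⊕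
  (((ℕ × ℕ) × (ℕ × List ℕ)) ⊕ (ℕ × ℕ × ℕ))

/-- Decoding an encoded rule. -/
def decodeRule : RuleE → Rule ℕ ℕ
  | .inl ((q, γ), (q', u), α) => .cr q γ q' u α
  | .inr (.inl ((q, γ), (q', u))) => .intr q γ q' u
  | .inr (.inr (q, γ, q')) => .res q γ q'

/-- An instance of the reachability problems: a finite list of rules, an initial
state and an initial stack symbol, and a target set `F` given as a list of states. -/
abbrev Inst := List RuleE × (ℕ × ℕ) × List ℕ

/-- The DCPS described by an instance. -/
def instDCPS (x : Inst) : DCPS ℕ ℕ where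
  rules := { r | ∃ e ∈ x.1, decodeRule e = r }
  q0 := x.2.1.1
  γ0 := x.2.1.2

/-! A run resumes its threads one segment at a time, and segments of different threads affect each
other only through the global states at their ends. So a state is reachable if and only if the
initial thread and its descendants can produce, each for itself, segments that fit together into
one sequence of non-decreasing stages with matching states.

A shortest such sequence is short. A thread whose next segment has stage `j` may halt instead of
beginning it, which also removes its later segments and those of the threads spawned there; these
all have stages greater than `j`. Hence all but as many segments of stage `j` as there are segments
of later stages can be removed individually, and if there are too many of stage `j`, then the
pigeonhole principle yields a loop on global states all of whose segments are removable. Downward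
induction on `j` bounds the length.

Which segments of bounded number the initial thread and its descendants can produce is a question
about pushdown systems, answered by saturation: it is derivability from finitely many Horn clauses,
all primitive recursive in the instance. -/

section Segments

variable {Q : Type*}

/-- A segment of a thread: what one resumption of it contributes to the global run. The thread is
resumed with switch number `stage` in global state `src`, and is interrupted in global state
`tgt`. -/
structure Segment (Q : Type*) where
  stage : ℕ
  src : Q
  tgt : Q

/-- Two consecutive segments of a stratified run: stages do not decrease, states match. -/
def Follows (e e' : Segment Q) : Prop := e.stage ≤ e'.stage ∧ e.tgt = e'.src

/-- The segments `J`, executed in this order, lead from stage `l` and state `q` to stage `k` and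
state `q'`. The two end points are encoded as empty segments around `J`. -/
def Schedule (l : ℕ) (q : Q) (J : List (Segment Q)) (k : ℕ) (q' : Q) : Prop :=
  List.IsChain Follows (⟨l, q, q⟩ :: (J ++ [⟨k, q', q'⟩]))

variable {l m k : ℕ} {q q₁ q' : Q} {e : Segment Q} {I J : List (Segment Q)}

@[simp]
theorem schedule_nil : Schedule l q [] k q' ↔ l ≤ k ∧ q = q' := by
  simp [Schedule, Follows]

@[simp]
theorem schedule_cons :
    Schedule l q (e :: J) k q' ↔ l ≤ e.stage ∧ q = e.src ∧ Schedule e.stage e.tgt J k q' := by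
  cases J <;> simp [Schedule, Follows, and_assoc]

namespace Schedule

theorem le (h : Schedule l q J k q') : l ≤ k := by
  induction J generalizing l q with
  | nil => exact (schedule_nil.1 h).1
  | cons e J ih =>
    obtain ⟨hl, -, h⟩ := schedule_cons.1 h
    exact hl.trans (ih h)

theorem mono_left (h : Schedule m q J k q') (hlm : l ≤ m) : Schedule l q J k q' := by
  cases J with
  | nil => exact schedule_nil.2 ⟨hlm.trans h.le, (schedule_nil.1 h).2⟩
  | cons e J =>
    obtain ⟨hm, h⟩ := schedule_cons.1 h
    exact schedule_cons.2 ⟨hlm.trans hm, h⟩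

theorem le_stage (h : Schedule l q J k q') : ∀ e ∈ J, l ≤ e.stage := by
  induction J generalizing l q with
  | nil => simp
  | cons e J ih =>
    obtain ⟨hl, -, h⟩ := schedule_cons.1 h
    exact List.forall_mem_cons.2 ⟨hl, fun e' he' => hl.trans (ih h e' he')⟩

theorem stage_le (h : Schedule l q J k q') : ∀ e ∈ J, e.stage ≤ k := by
  induction J generalizing l q with
  | nil => simp
  | cons e J ih =>
    obtain ⟨-, -, h⟩ := schedule_cons.1 h
    exact List.forall_mem_cons.2 ⟨h.le, ih h⟩

theorem append (h : Schedule l q I m q₁) (h' : Schedule m q₁ J k q') :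
    Schedule l q (I ++ J) k q' := by
  induction I generalizing l q with
  | nil =>
    obtain ⟨hlm, rfl⟩ := schedule_nil.1 h
    exact h'.mono_left hlm
  | cons e I ih =>
    obtain ⟨hl, rfl, hI⟩ := schedule_cons.1 h
    exact schedule_cons.2 ⟨hl, rfl, ih hI⟩

theorem exists_of_append (h : Schedule l q (I ++ J) k q') (hlm : l ≤ m) (hmk : m ≤ k)
    (hI : ∀ e ∈ I, e.stage ≤ m) (hJ : ∀ e ∈ J, m ≤ e.stage) :
    ∃ q₁, Schedule l q I m q₁ ∧ Schedule m q₁ J k q' := by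
  induction I generalizing l q with
  | nil =>
    refine ⟨q, schedule_nil.2 ⟨hlm, rfl⟩, ?_⟩
    cases J with
    | nil => exact schedule_nil.2 ⟨hmk, (schedule_nil.1 h).2⟩
    | cons e J => exact schedule_cons.2 ⟨hJ e List.mem_cons_self, (schedule_cons.1 h).2⟩
  | cons e I ih =>
    obtain ⟨hl, rfl, hIJ⟩ := schedule_cons.1 h
    obtain ⟨hem, hI⟩ := List.forall_mem_cons.1 hI
    obtain ⟨q₁, h₁, h₂⟩ := ih hIJ hem hI
    exact ⟨q₁, schedule_cons.2 ⟨hl, rfl, h₁⟩, h₂⟩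

theorem exists_split_lt (h : Schedule l q J k q') (j : ℕ) :
    ∃ I I', J = I ++ I' ∧ (∀ e ∈ I, e.stage < j) ∧ ∀ e ∈ I', j ≤ e.stage := by
  induction J generalizing l q with
  | nil => exact ⟨[], [], rfl, by simp, by simp⟩
  | cons e J ih =>
    obtain ⟨-, -, hJ⟩ := schedule_cons.1 h
    obtain he | he := lt_or_ge e.stage j
    · obtain ⟨I, I', rfl, hI, hI'⟩ := ih hJ
      exact ⟨e :: I, I', rfl, List.forall_mem_cons.2 ⟨he, hI⟩, hI'⟩
    · exact ⟨[], e :: J, rfl, by simp,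
        List.forall_mem_cons.2 ⟨he, fun e' he' => he.trans (hJ.le_stage e' he')⟩⟩

theorem foldl_tgt (h : Schedule l q J k q') : J.foldl (fun _ e => e.tgt) q = q' := by
  induction J generalizing l q with
  | nil => exact (schedule_nil.1 h).2
  | cons e J ih => exact ih (schedule_cons.1 h).2.2

end Schedule

end Segments

section Runs

variable {Q Γ : Type*} {M : DCPS Q Γ}

/-- What a thread is committed to: nothing any more (`dead`), waiting with switch number `i`
(`idle i`), or running with switch number `i` in global state `q` so as to be interrupted in
global state `q'` (`active i q q'`). -/
inductive Phase (Q : Type*) where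
  | dead
  | idle (i : ℕ)
  | active (i : ℕ) (q q' : Q)

/-- `Life M φ w I`: a thread with stack `w` in phase `φ`, together with all the threads that it
spawns, can run in such a way that the segments begun from now on are `I`. Different threads
interact only through the global states at the ends of their segments, so lives can be composed
freely. The interruption state of a segment is guessed upon resumption. -/
inductive Life (M : DCPS Q Γ) : Phase Q → List Γ → Multiset (Segment Q) → Prop
  | dead (w) : Life M .dead w 0
  | halt (i w) : Life M (.idle i) w 0
  | res {i q γ q₁ q' w I} : Rule.res q γ q₁ ∈ M.rules →
      Life M (.active i q₁ q') (γ :: w) I → Life M (.idle i) (γ :: w) (⟨i, q, q'⟩ ::ₘ I)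
  | cr {i q γ q₁ q' u w I} : Rule.cr q γ q₁ u none ∈ M.rules →
      Life M (.active i q₁ q') (u ++ w) I → Life M (.active i q q') (γ :: w) I
  | spawn {i q γ q₁ q' u a w I₁ I₂} : Rule.cr q γ q₁ u (some a) ∈ M.rules →
      Life M (.idle (i + 1)) [a] I₁ → Life M (.active i q₁ q') (u ++ w) I₂ →
      Life M (.active i q q') (γ :: w) (I₁ + I₂)
  | intr {i q γ q' u w I} : Rule.intr q γ q' u ∈ M.rules →
      Life M (.idle (i + 1)) (u ++ w) I → Life M (.active i q q') (γ :: w) I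

/-- A lower bound for the stages of the segments that a thread in the given phase can begin. -/
def Phase.minStage : Phase Q → ℕ
  | .dead => 0
  | .idle i => i
  | .active i _ _ => i + 1

theorem Life.minStage_le {φ w I} (h : Life M φ w I) : ∀ e ∈ I, φ.minStage ≤ e.stage := by
  induction h with
  | dead | halt => simp
  | res _ _ ih =>
    exact Multiset.forall_mem_cons.2 ⟨le_rfl, fun e he => (Nat.le_succ _).trans (ih e he)⟩
  | cr _ _ ih => exact ih
  | spawn _ _ _ ih₁ ih₂ =>
    intro e he
    exact (Multiset.mem_add.1 he).elim (ih₁ e) (ih₂ e)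
  | intr _ _ ih => exact ih

/-- The threads in the pool `V` can begin the segments `I` in total. -/
def PoolLife (M : DCPS Q Γ) (V : Multiset (List Γ × ℕ)) (I : Multiset (Segment Q)) : Prop :=
  ∃ Is : Multiset (Multiset (Segment Q)),
    Multiset.Rel (fun t I => Life M (.idle t.2) t.1 I) V Is ∧ Is.sum = I

namespace PoolLife

variable {V : Multiset (List Γ × ℕ)} {w : List Γ} {i : ℕ} {I I₁ I₂ : Multiset (Segment Q)}

theorem cons (h₁ : Life M (.idle i) w I₁) (h₂ : PoolLife M V I₂) :
    PoolLife M ((w, i) ::ₘ V) (I₁ + I₂) := by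
  obtain ⟨Is, hV, rfl⟩ := h₂
  exact ⟨I₁ ::ₘ Is, hV.cons h₁, Multiset.sum_cons _ _⟩

theorem uncons (h : PoolLife M ((w, i) ::ₘ V) I) :
    ∃ I₁ I₂, Life M (.idle i) w I₁ ∧ PoolLife M V I₂ ∧ I = I₁ + I₂ := by
  obtain ⟨_, h, rfl⟩ := h
  obtain ⟨I₁, Is, h₁, hV, rfl⟩ := Multiset.rel_cons_left.1 h
  exact ⟨I₁, Is.sum, h₁, ⟨Is, hV, rfl⟩, Multiset.sum_cons _ _⟩

theorem halt (V : Multiset (List Γ × ℕ)) : PoolLife M V 0 := by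
  induction V using Multiset.induction with
  | empty => exact ⟨0, Multiset.Rel.zero, Multiset.sum_zero⟩
  | cons t V ih => exact cons (.halt _ _) ih

theorem exists_thread {e : Segment Q} (h : PoolLife M V I) (he : e ∈ I) :
    ∃ w i V' I₁ I₂, V = (w, i) ::ₘ V' ∧ I = I₁ + I₂ ∧ e ∈ I₁ ∧
      Life M (.idle i) w I₁ ∧ PoolLife M V' I₂ := by
  obtain ⟨Is, h, rfl⟩ := h
  obtain ⟨I₁, hI₁, heI⟩ := Multiset.mem_join.1 he
  obtain ⟨Is, rfl⟩ := Multiset.exists_cons_of_mem hI₁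
  obtain ⟨⟨w, i⟩, V', h₁, hV, rfl⟩ := Multiset.rel_cons_right.1 h
  exact ⟨w, i, V', I₁, Is.sum, rfl, Multiset.sum_cons _ _, heI, h₁, Is, hV, rfl⟩

end PoolLife

theorem poolLife_singleton {w : List Γ} {i : ℕ} {I : Multiset (Segment Q)} :
    PoolLife M {(w, i)} I ↔ Life M (.idle i) w I := by
  rw [← Multiset.cons_zero]
  constructor
  · intro h
    obtain ⟨I₁, _, hlife, ⟨Is, hIs, rfl⟩, rfl⟩ := h.uncons
    obtain rfl := Multiset.rel_zero_left.1 hIs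
    simpa using hlife
  · intro h
    simpa using PoolLife.cons h (PoolLife.halt 0)

/-- `StratRun M k q l c`: from the configuration `c` in stage `l`, the run can be completed
stratifiedly so as to end inactive in stage `k` and state `q`. -/
inductive StratRun (M : DCPS Q Γ) (k : ℕ) (q : Q) : ℕ → Config Q Γ → Prop
  | done {V} : StratRun M k q k ⟨q, none, V⟩
  | next {l c} : l < k → StratRun M k q (l + 1) c → StratRun M k q l c
  | step {l r c c'} : StepIn M {l} r c c' → StratRun M k q l c' → StratRun M k q l c

namespace StratRun

variable {k l : ℕ} {q : Q} {c c' : Config Q Γ}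

theorem of_reachesIn (h : ReachesIn M {l} c c') (h' : StratRun M k q l c') :
    StratRun M k q l c := by
  induction h using Relation.ReflTransGen.head_induction_on with
  | refl => exact h'
  | head hs _ ih => exact .step hs.choose_spec ih

theorem of_le {m : ℕ} (hlm : l ≤ m) (hmk : m ≤ k) (h : StratRun M k q m c) :
    StratRun M k q l c := by
  induction hlm using Nat.decreasingInduction with
  | self => exact h
  | of_succ l hl ih => exact .next (hl.trans_le hmk) ih

theorem exists_configs (h : StratRun M k q l c) :
    l ≤ k ∧ ∃ f : ℕ → Config Q Γ, f l = c ∧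
      (∀ m, l ≤ m → m ≤ k → ReachesIn M {m} (f m) (f (m + 1))) ∧
      (f (k + 1)).active = none ∧ (f (k + 1)).state = q := by
  classical
  induction h with
  | @done V =>
    exact ⟨le_rfl, fun _ => ⟨q, none, V⟩, rfl, fun _ _ _ => .refl, rfl, rfl⟩
  | @next l c hl _ ih =>
    obtain ⟨-, f, hf, hstep, hend⟩ := ih
    refine ⟨hl.le, Function.update f l c, by simp, fun m hlm hmk => ?_, ?_⟩
    · obtain rfl | hlm := hlm.eq_or_lt
      · simpa [hf] using .refl
      · simpa [hlm.ne', (hlm.trans (Nat.lt_succ_self m)).ne'] using hstep m hlm hmk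
    · simpa [(Nat.lt_succ_of_lt hl).ne'] using hend
  | @step l r c c' hs _ ih =>
    obtain ⟨hl, f, rfl, hstep, hend⟩ := ih
    refine ⟨hl, Function.update f l c, by simp, fun m hlm hmk => ?_, ?_⟩
    · obtain rfl | hlm := hlm.eq_or_lt
      · have hreach : ReachesIn M {l} c (f (l + 1)) := (hstep l le_rfl hl).head ⟨r, hs⟩
        simpa using hreach
      · simpa [hlm.ne', (hlm.trans (Nat.lt_succ_self m)).ne'] using hstep m hlm.le hmk
    · simpa [(Nat.lt_succ_of_le hl).ne'] using hend

end StratRun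

theorem kStratifiedReachable_iff_stratRun {k : ℕ} {q : Q} :
    KStratifiedReachable M k q ↔ StratRun M k q 0 (initConfig M) := by
  constructor
  · rintro ⟨c, h0, hstep, hnone, hstate⟩
    have hlast : StratRun M k q k (c (k + 1)) := by
      cases hc : c (k + 1)
      simp only [hc] at hnone hstate
      exact hnone ▸ hstate ▸ .done
    rw [← h0]
    suffices h : ∀ l ≤ k, StratRun M k q l (c l) from h 0 (Nat.zero_le k)
    intro l hl
    induction hl using Nat.decreasingInduction with
    | self => exact .of_reachesIn (hstep k le_rfl) hlast
    | of_succ l hl ih => exact .of_reachesIn (hstep l hl.le) (.next hl ih)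
  · intro h
    obtain ⟨-, f, h0, hstep, hend⟩ := h.exists_configs
    exact ⟨f, h0, fun l hl => hstep l (Nat.zero_le l) hl, hend⟩

/-- A plan to complete a stratified run from `c`, consisting of an order in which all future
segments of the threads are executed. A thread running in `c` first completes its current
segment. -/
def Plan (M : DCPS Q Γ) (k : ℕ) (q : Q) (l : ℕ) (c : Config Q Γ) : Prop :=
  match c.active with
  | none => ∃ J : List (Segment Q),
      Schedule l c.state J k q ∧ PoolLife M (Finsupp.toMultiset c.idle) J
  | some (w, i) => l ≤ i ∧ ∃ (q' : Q) (J : List (Segment Q)) (I₁ I₂ : Multiset (Segment Q)),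
      Schedule i q' J k q ∧ Life M (.active i c.state q') w I₁ ∧
        PoolLife M (Finsupp.toMultiset c.idle) I₂ ∧ (J : Multiset (Segment Q)) = I₁ + I₂

theorem toMultiset_add_single {α : Type*} (V : α →₀ ℕ) (a : α) :
    Finsupp.toMultiset (V + Finsupp.single a 1) = a ::ₘ Finsupp.toMultiset V := by
  simp [Finsupp.toMultiset_single, add_comm]

theorem exists_eq_add_single {α : Type*} {V : α →₀ ℕ} {a : α} {s : Multiset α}
    (h : Finsupp.toMultiset V = a ::ₘ s) :
    ∃ V', V = V' + Finsupp.single a 1 ∧ Finsupp.toMultiset V' = s := by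
  classical
  refine ⟨Multiset.toFinsupp s, ?_, Multiset.toFinsupp_toMultiset s⟩
  rw [← Finsupp.toMultiset_toFinsupp V, h, ← Multiset.singleton_add, add_comm, map_add,
    Multiset.toFinsupp_singleton]

namespace Plan

variable {k l : ℕ} {q : Q} {c c' : Config Q Γ} {r : Rule Q Γ}

theorem mono_left {m : ℕ} (h : Plan M k q m c) (hlm : l ≤ m) : Plan M k q l c := by
  obtain ⟨s, _ | ⟨w, i⟩, V⟩ := c
  · obtain ⟨J, hJ, hV⟩ := h
    exact ⟨J, hJ.mono_left hlm, hV⟩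
  · exact ⟨hlm.trans h.1, h.2⟩

theorem of_step (hs : StepIn M {l} r c c') (h : Plan M k q l c') : Plan M k q l c := by
  obtain ⟨hs, hact⟩ := hs
  cases hs with
  | @cr s γ s' u α w i V hr =>
    obtain ⟨hl, q', J, I₁, I₂, hJ, hlife, hV, hI⟩ := h
    refine ⟨hl, q', J, ?_⟩
    cases α with
    | none => exact ⟨I₁, I₂, hJ, .cr hr hlife, by simpa [spawnOf] using hV, hI⟩
    | some a =>
      simp only [spawnOf, toMultiset_add_single] at hV
      obtain ⟨I₃, I₄, hchild, hV', rfl⟩ := hV.uncons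
      exact ⟨I₃ + I₁, I₄, hJ, .spawn hr hchild hlife, hV', by rw [hI]; abel⟩
  | @intr s γ s' u w i V hr =>
    obtain rfl : i = l := by simpa [ActiveIn] using hact
    obtain ⟨J, hJ, hV⟩ := h
    simp only [toMultiset_add_single] at hV
    obtain ⟨I₁, I₂, hlife, hV, hI⟩ := hV.uncons
    exact ⟨le_rfl, s', J, I₁, I₂, hJ, .intr hr hlife, hV, hI⟩
  | @res s γ s' w i V hr =>
    obtain rfl : i = l := by simpa [ActiveIn] using hact
    obtain ⟨-, q', J, I₁, I₂, hJ, hlife, hV, hI⟩ := h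
    refine ⟨⟨i, s, q'⟩ :: J, schedule_cons.2 ⟨le_rfl, rfl, hJ⟩, ?_⟩
    rw [toMultiset_add_single, ← Multiset.cons_coe, hI, ← Multiset.cons_add]
    exact PoolLife.cons (.res hr hlife) hV

end Plan

theorem StratRun.plan {k l : ℕ} {q : Q} {c : Config Q Γ} (h : StratRun M k q l c) :
    Plan M k q l c := by
  induction h with
  | done => exact ⟨[], schedule_nil.2 ⟨le_rfl, rfl⟩, PoolLife.halt _⟩
  | next _ _ ih => exact ih.mono_left (Nat.le_succ _)
  | step hs _ ih => exact ih.of_step hs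

theorem Life.stratRun_of_active {k i : ℕ} {q s s' : Q} {w : List Γ} {V : List Γ × ℕ →₀ ℕ}
    {I₁ I₂ : Multiset (Segment Q)} (h : Life M (.active i s s') w I₁)
    (hV : PoolLife M (Finsupp.toMultiset V) I₂)
    (hrest : ∀ V', PoolLife M (Finsupp.toMultiset V') (I₁ + I₂) → StratRun M k q i ⟨s', none, V'⟩) :
    StratRun M k q i ⟨s, some (w, i), V⟩ := by
  generalize hφ : Phase.active i s s' = φ at h
  induction h generalizing s V I₂ with
  | dead | halt | res => cases hφ
  | cr hr _ ih =>
    cases hφ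
    refine .step ⟨Step.cr hr, .inl ⟨_, i, rfl, rfl⟩⟩ ?_
    rw [spawnOf, add_zero]
    exact ih hV hrest rfl
  | @spawn _ _ _ _ _ _ _ _ I₁ I₁' hr hchild _ _ ih =>
    cases hφ
    refine .step ⟨Step.cr hr, .inl ⟨_, i, rfl, rfl⟩⟩ (ih (I₂ := I₁ + I₂) ?_ (fun V' hV' => ?_) rfl)
    · rw [spawnOf, toMultiset_add_single]
      exact PoolLife.cons hchild hV
    · exact hrest V' (by rwa [add_assoc, add_left_comm])
  | intr hr hlife =>
    cases hφ
    refine .step ⟨Step.intr hr, .inl ⟨_, i, rfl, rfl⟩⟩ (hrest _ ?_)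
    rw [toMultiset_add_single]
    exact PoolLife.cons hlife hV

theorem stratRun_of_schedule {k l : ℕ} {q s : Q} {J : List (Segment Q)} {V : List Γ × ℕ →₀ ℕ}
    (hJ : Schedule l s J k q) (hV : PoolLife M (Finsupp.toMultiset V) J) :
    StratRun M k q l ⟨s, none, V⟩ := by
  induction J generalizing l s V with
  | nil =>
    obtain ⟨hl, rfl⟩ := schedule_nil.1 hJ
    exact .of_le hl le_rfl .done
  | cons e J ih =>
    obtain ⟨hl, rfl, hJe⟩ := schedule_cons.1 hJ
    refine .of_le hl hJe.le ?_
    obtain ⟨w, i, V', I₁, I₂, hVV', hI, he, hlife, hV'⟩ := hV.exists_thread (e := e) (by simp)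
    obtain ⟨V', rfl, rfl⟩ := exists_eq_add_single hVV'
    have hstage : ∀ e' ∈ I₁ + I₂, e.stage ≤ e'.stage := by
      rw [← hI]
      exact List.forall_mem_cons.2 ⟨le_rfl, hJe.le_stage⟩
    cases hlife with
    | halt => simp at he
    | @res _ s γ s₁ s' w I₁ hr hlife =>
      have hei : e = ⟨i, s, s'⟩ := by
        refine (Multiset.mem_cons.1 he).resolve_right fun he => ?_
        have hi : e.stage ≤ i := hstage ⟨i, s, s'⟩ (by simp)
        exact absurd (hlife.minStage_le e he) (by simpa [Phase.minStage] using hi)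
      subst hei
      have hIJ : (J : Multiset (Segment Q)) = I₁ + I₂ := by
        simpa [← Multiset.cons_coe] using hI
      refine .step ⟨Step.res hr, .inr ⟨_, i, rfl, rfl⟩⟩ (hlife.stratRun_of_active hV' ?_)
      exact fun V hV => ih hJe (hIJ ▸ hV)

theorem kStratifiedReachable_iff {k : ℕ} {q : Q} :
    KStratifiedReachable M k q ↔
      ∃ J : List (Segment Q), Schedule 0 M.q0 J k q ∧ Life M (.idle 0) [M.γ0] J := by
  have hpool (J : Multiset (Segment Q)) :
      PoolLife M (Finsupp.toMultiset (initConfig M).idle) J ↔ Life M (.idle 0) [M.γ0] J := by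
    rw [initConfig, Finsupp.toMultiset_single, one_nsmul, poolLife_singleton]
  rw [kStratifiedReachable_iff_stratRun]
  constructor
  · intro h
    obtain ⟨J, hJ, hV⟩ := h.plan
    exact ⟨J, hJ, (hpool J).1 hV⟩
  · rintro ⟨J, hJ, hlife⟩
    exact stratRun_of_schedule hJ ((hpool J).2 hlife)

end Runs

section SmallModel

variable {Q Γ : Type*}

/-- All states, stack symbols and pushed words of `M` are drawn from `S`, `A` and the words of
length at most `n`. -/
structure DCPS.Within (M : DCPS Q Γ) (S : Finset Q) (A : Finset Γ) (n : ℕ) : Prop where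
  q0 : M.q0 ∈ S
  γ0 : M.γ0 ∈ A
  cr {q γ q' u α} : Rule.cr q γ q' u α ∈ M.rules →
    q' ∈ S ∧ u.length ≤ n ∧ (∀ a ∈ u, a ∈ A) ∧ ∀ a ∈ α, a ∈ A
  intr {q γ q' u} : Rule.intr q γ q' u ∈ M.rules → q' ∈ S ∧ u.length ≤ n ∧ ∀ a ∈ u, a ∈ A
  res {q γ q'} : Rule.res q γ q' ∈ M.rules → q ∈ S ∧ q' ∈ S

variable {M : DCPS Q Γ} {S : Finset Q} {A : Finset Γ} {n : ℕ}

theorem Life.goal_mem (hM : M.Within S A n) {φ w I} (h : Life M φ w I) {i : ℕ} {q q' : Q}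
    (hφ : φ = .active i q q') : q' ∈ S := by
  induction h generalizing q with
  | dead | halt | res => cases hφ
  | cr _ _ ih => cases hφ; exact ih rfl
  | spawn _ _ _ _ ih => cases hφ; exact ih rfl
  | intr hr => cases hφ; exact (hM.intr hr).1

theorem Life.states_mem (hM : M.Within S A n) {φ w I} (h : Life M φ w I) :
    ∀ e ∈ I, e.src ∈ S ∧ e.tgt ∈ S := by
  induction h with
  | dead | halt => simp
  | res hr h ih => exact Multiset.forall_mem_cons.2 ⟨⟨(hM.res hr).1, h.goal_mem hM rfl⟩, ih⟩
  | cr _ _ ih => exact ih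
  | spawn _ _ _ ih₁ ih₂ =>
    intro e he
    exact (Multiset.mem_add.1 he).elim (ih₁ e) (ih₂ e)
  | intr _ _ ih => exact ih

/-- `I` satisfies `L`, and it keeps doing so when segments of stage `j` are removed, with the
exception of some segments of stage `j` that are at most as many as those of later stages. -/
def Prunable (j : ℕ) (L : Multiset (Segment Q) → Prop) (I : Multiset (Segment Q)) : Prop :=
  ∃ C R, I = C + R ∧ (∀ e ∈ R, e.stage = j) ∧
    C.countP (·.stage = j) ≤ C.countP (j < ·.stage) ∧ ∀ R' ≤ R, L (C + R')

namespace Prunable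

variable {j : ℕ} {L L₁ L₂ : Multiset (Segment Q) → Prop} {I I₁ I₂ : Multiset (Segment Q)}
  {e : Segment Q}

theorem zero (h : L 0) : Prunable j L 0 := by
  refine ⟨0, 0, (add_zero 0).symm, by simp, le_rfl, fun R' hR' => ?_⟩
  rwa [nonpos_iff_eq_zero.1 hR', add_zero]

theorem mono (h : Prunable j L₁ I) (hL : ∀ I, L₁ I → L₂ I) : Prunable j L₂ I := by
  obtain ⟨C, R, hI, hR, hC, hCR⟩ := h
  exact ⟨C, R, hI, hR, hC, fun R' hR' => hL _ (hCR R' hR')⟩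

theorem cons (h : Prunable j L₁ I) (he : e.stage ≠ j) (hL : ∀ I, L₁ I → L₂ (e ::ₘ I)) :
    Prunable j L₂ (e ::ₘ I) := by
  obtain ⟨C, R, rfl, hR, hC, hCR⟩ := h
  refine ⟨e ::ₘ C, R, (Multiset.cons_add _ _ _).symm, hR, ?_, fun R' hR' => ?_⟩
  · simp only [Multiset.countP_cons, he, if_false]
    omega
  · rw [Multiset.cons_add]
    exact hL _ (hCR R' hR')

/-- A segment of stage `j` can only be dropped along with its successors; if there are some, they
pay for keeping it. -/
theorem cons_of_stage_eq (he : e.stage = j) (hI : ∀ e ∈ I, j < e.stage) (h0 : L 0)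
    (h : L (e ::ₘ I)) : Prunable j L (e ::ₘ I) := by
  obtain rfl | hne := eq_or_ne I 0
  · refine ⟨0, {e}, (zero_add _).symm, by simpa using he, le_rfl, fun R' hR' => ?_⟩
    obtain rfl | rfl := Multiset.le_singleton.1 hR'
    · simpa using h0
    · simpa using h
  · refine ⟨e ::ₘ I, 0, (add_zero _).symm, by simp, ?_, fun R' hR' => ?_⟩
    · have hlt : I.countP (j < ·.stage) = I.card := Multiset.countP_eq_card.2 hI
      have heq : I.countP (·.stage = j) = 0 := Multiset.countP_eq_zero.2 fun e he => (hI e he).ne'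
      have hpos : 0 < I.card := Multiset.card_pos.2 hne
      simp only [Multiset.countP_cons, heq, hlt, he, lt_irrefl, if_true, if_false]
      omega
    · rwa [nonpos_iff_eq_zero.1 hR', add_zero]

theorem add (h₁ : Prunable j L₁ I₁) (h₂ : Prunable j L₂ I₂)
    (hL : ∀ I₁ I₂, L₁ I₁ → L₂ I₂ → L (I₁ + I₂)) : Prunable j L (I₁ + I₂) := by
  classical
  obtain ⟨C₁, R₁, rfl, hR₁, hC₁, hCR₁⟩ := h₁
  obtain ⟨C₂, R₂, rfl, hR₂, hC₂, hCR₂⟩ := h₂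
  refine ⟨C₁ + C₂, R₁ + R₂, add_add_add_comm _ _ _ _, fun e he => ?_, ?_, fun R' hR' => ?_⟩
  · exact (Multiset.mem_add.1 he).elim (hR₁ e) (hR₂ e)
  · rw [Multiset.countP_add, Multiset.countP_add]
    exact add_le_add hC₁ hC₂
  · rw [← Multiset.sub_add_inter R' R₁, add_comm (R' - R₁), add_add_add_comm]
    exact hL _ _ (hCR₁ _ Multiset.inter_le_right) (hCR₂ _ (tsub_le_iff_left.2 hR'))

end Prunable

theorem Life.prunable {φ w I} (h : Life M φ w I) {j : ℕ} (hφ : ∀ q q', φ ≠ .active j q q') :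
    Prunable j (Life M φ w) I := by
  induction h with
  | dead w => exact .zero (.dead w)
  | halt i w => exact .zero (.halt i w)
  | @res i q γ q₁ q' w I hr h ih =>
    by_cases hij : i = j
    · exact .cons_of_stage_eq hij (hij ▸ h.minStage_le) (.halt _ _) (.res hr h)
    · exact (ih (by simp [hij])).cons hij fun _ => .res hr
  | cr hr _ ih => exact (ih (by simpa using hφ)).mono fun _ => .cr hr
  | spawn hr _ _ ih₁ ih₂ =>
    exact (ih₁ (by simp)).add (ih₂ (by simpa using hφ)) fun _ _ => .spawn hr
  | intr hr _ ih => exact (ih (by simp)).mono fun _ => .intr hr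

/-- Pigeonhole on the pairs of `f X` and the number of elements of `C` in `X`, for the prefixes `X`
of `B`. -/
theorem exists_loop_le {α σ : Type*} {S : Finset σ} (f : List α → σ) {B : List α}
    {C R : Multiset α} (hB : (B : Multiset α) = C + R) (hf : ∀ X, X <+: B → f X ∈ S)
    (hlen : S.card * (C.card + 1) ≤ B.length) :
    ∃ X Y Z, B = X ++ Y ++ Z ∧ Y ≠ [] ∧ f X = f (X ++ Y) ∧ (Y : Multiset α) ≤ R := by
  classical
  obtain ⟨i, i', hii', hi', hfi, hCi⟩ : ∃ i i', i < i' ∧ i' ≤ B.length ∧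
      f (B.take i) = f (B.take i') ∧
      (C ∩ (B.take i : Multiset α)).card = (C ∩ (B.take i' : Multiset α)).card := by
    let g (i : ℕ) : σ × ℕ := (f (B.take i), (C ∩ (B.take i : Multiset α)).card)
    have hg : ∀ i ∈ Finset.range (B.length + 1), g i ∈ S ×ˢ Finset.range (C.card + 1) := by
      intro i _
      simp only [g, Finset.mem_product, Finset.mem_range, Nat.lt_succ_iff]
      exact ⟨hf _ (List.take_prefix _ _), Multiset.card_le_card Multiset.inter_le_left⟩
    have hcard : (S ×ˢ Finset.range (C.card + 1)).card < (Finset.range (B.length + 1)).card := by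
      simpa [Nat.lt_succ_iff] using hlen
    obtain ⟨i, hi, i', hi', hne, heq⟩ := Finset.exists_ne_map_eq_of_card_lt_of_maps_to hcard hg
    simp only [g, Prod.mk.injEq, Finset.mem_range, Nat.lt_succ_iff] at heq hi hi'
    obtain hlt | hlt := hne.lt_or_gt
    · exact ⟨i, i', hlt, hi', heq⟩
    · exact ⟨i', i, hlt, hi, heq.1.symm, heq.2.symm⟩
  have hpre : B.take i <+: B.take i' := List.take_prefix_take_left hii'.le
  have hsub : (B.take i : Multiset α) ≤ B.take i' := hpre.sublist.subperm
  obtain ⟨Y, hY⟩ := hpre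
  refine ⟨B.take i, Y, B.drop i', by rw [hY, List.take_append_drop], ?_, by rw [hY, hfi], ?_⟩
  · rintro rfl
    have hlen := congrArg List.length hY
    simp only [List.append_nil, List.length_take] at hlen
    omega
  · have hCeq : C ∩ (B.take i : Multiset α) = C ∩ (B.take i' : Multiset α) :=
      Multiset.eq_of_le_of_card_le (inf_le_inf_left C hsub) hCi.ge
    rw [← List.take_append_drop i' B, ← hY] at hB
    rw [← hY] at hCeq
    refine Multiset.le_iff_count.2 fun a => ?_
    replace hB := congrArg (Multiset.count a) hB
    replace hCeq := congrArg (Multiset.count a) hCeq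
    simp only [Multiset.coe_count, List.count_append, Multiset.count_add,
      Multiset.count_inter] at hB hCeq ⊢
    omega

theorem Schedule.exists_stage_split {l j k : ℕ} {q q' : Q} {J : List (Segment Q)}
    (hJ : Schedule l q J k q') (hlj : l ≤ j) (hjk : j ≤ k) :
    ∃ A B D q₁ q₂, J = A ++ B ++ D ∧ (∀ e ∈ A, e.stage < j) ∧ (∀ e ∈ B, e.stage = j) ∧
      (∀ e ∈ D, j < e.stage) ∧
      Schedule l q A j q₁ ∧ Schedule j q₁ B j q₂ ∧ Schedule j q₂ D k q' := by
  obtain ⟨A, J', rfl, hA, hJ'⟩ := hJ.exists_split_lt j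
  obtain ⟨q₁, hqA, hqJ'⟩ := hJ.exists_of_append hlj hjk (fun e he => (hA e he).le) hJ'
  obtain ⟨B, D, rfl, hB, hD⟩ := hqJ'.exists_split_lt (j + 1)
  have hBj : ∀ e ∈ B, e.stage = j := fun e he =>
    (Nat.le_of_lt_succ (hB e he)).antisymm (hJ' e (List.mem_append_left D he))
  obtain ⟨q₂, hqB, hqD⟩ := hqJ'.exists_of_append le_rfl hjk (fun e he => (hBj e he).le)
    fun e he => (Nat.lt_of_succ_le (hD e he)).le
  exact ⟨A, B, D, q₁, q₂, (List.append_assoc _ _ _).symm, hA, hBj, hD, hqA, hqB, hqD⟩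

theorem Schedule.cut {j : ℕ} {q q' : Q} {X Y Z : List (Segment Q)}
    (h : Schedule j q (X ++ Y ++ Z) j q')
    (hloop : X.foldl (fun _ e => e.tgt) q = (X ++ Y).foldl (fun _ e => e.tgt) q) :
    Schedule j q (X ++ Z) j q' := by
  have hstage : ∀ e ∈ X ++ Y ++ Z, e.stage = j := fun e he =>
    (h.stage_le e he).antisymm (h.le_stage e he)
  have hXY : ∀ e ∈ X ++ Y, e.stage = j := fun e he => hstage e (List.mem_append_left Z he)
  obtain ⟨p, hp, hZ⟩ := h.exists_of_append le_rfl le_rfl (fun e he => (hXY e he).le)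
    fun e he => (hstage e (List.mem_append_right _ he)).ge
  obtain ⟨p', hX, -⟩ := hp.exists_of_append le_rfl le_rfl
    (fun e he => (hXY e (List.mem_append_left Y he)).le)
    fun e he => (hXY e (List.mem_append_right X he)).ge
  obtain rfl : p' = p := by rw [← hX.foldl_tgt, hloop, hp.foldl_tgt]
  exact hX.append hZ

theorem foldl_tgt_mem {q : Q} {J : List (Segment Q)} (hq : q ∈ S) (hJ : ∀ e ∈ J, e.tgt ∈ S) :
    J.foldl (fun _ e => e.tgt) q ∈ S := by
  induction J generalizing q with
  | nil => exact hq
  | cons e J ih =>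
    obtain ⟨he, hJ⟩ := List.forall_mem_cons.1 hJ
    exact ih he hJ

/-- Among many segments of stage `j`, there is a sequence that returns to its first state and
consists of removable segments only. -/
theorem Schedule.exists_shorter {l j k : ℕ} {q q' : Q} {J : List (Segment Q)}
    {L : Multiset (Segment Q) → Prop} (hJ : Schedule l q J k q') (hq : q ∈ S)
    (hS : ∀ e ∈ J, e.tgt ∈ S) (hprune : Prunable j L J) (hlj : l ≤ j) (hjk : j ≤ k)
    (hlong : S.card * (J.countP (j < ·.stage) + 1) ≤ J.countP (·.stage = j)) :
    ∃ J', Schedule l q J' k q' ∧ L J' ∧ J'.length < J.length := by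
  obtain ⟨A, B, D, q₁, q₂, rfl, hA, hB, hD, hqA, hqB, hqD⟩ := hJ.exists_stage_split hlj hjk
  obtain ⟨C, R, hCR, hR, hC, hL⟩ := hprune
  simp only [List.forall_mem_append] at hS
  have hJB : (A ++ B ++ D).filter (·.stage = j) = B := by
    have hA' : A.filter (·.stage = j) = [] := by simpa using fun e he => (hA e he).ne
    have hB' : B.filter (·.stage = j) = B := by simpa using hB
    have hD' : D.filter (·.stage = j) = [] := by simpa using fun e he => (hD e he).ne'
    simp [hA', hB', hD']
  have hBC : (B : Multiset (Segment Q)) = C.filter (·.stage = j) + R := by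
    rw [← hJB, ← Multiset.filter_coe, hCR, Multiset.filter_add, Multiset.filter_eq_self.2 hR]
  have hlate : (A ++ B ++ D).countP (j < ·.stage) = C.countP (j < ·.stage) := by
    rw [← Multiset.coe_countP, hCR, Multiset.countP_add,
      Multiset.countP_eq_zero.2 fun e he => (hR e he).not_gt, add_zero]
  have hBlen : S.card * ((C.filter (·.stage = j)).card + 1) ≤ B.length := by
    rw [hlate, List.countP_eq_length_filter, hJB] at hlong
    rw [← Multiset.countP_eq_card_filter]
    exact (Nat.mul_le_mul_left _ (Nat.succ_le_succ hC)).trans hlong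
  obtain ⟨X, Y, Z, rfl, hY, hloop, hYR⟩ :=
    exists_loop_le (S := S) (fun X => X.foldl (fun _ e => e.tgt) q₁) hBC
      (fun X hX => foldl_tgt_mem (hqA.foldl_tgt ▸ foldl_tgt_mem hq hS.1.1)
        fun e he => hS.1.2 e (hX.subset he))
      hBlen
  obtain ⟨R', rfl⟩ := Multiset.le_iff_exists_add.1 hYR
  have hrest : C + R' = ((A ++ (X ++ Z) ++ D : List (Segment Q)) : Multiset (Segment Q)) := by
    refine add_left_cancel (a := (Y : Multiset (Segment Q))) ?_
    rw [add_left_comm, ← hCR]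
    simp only [← Multiset.coe_add]
    abel
  refine ⟨A ++ (X ++ Z) ++ D, (hqA.append (hqB.cut hloop)).append hqD, ?_, ?_⟩
  · exact hrest ▸ hL R' (Multiset.le_add_left _ _)
  · have := List.length_pos_iff.2 hY
    simp only [List.length_append]
    omega

theorem countP_le_stage (J : List (Segment Q)) (j : ℕ) :
    J.countP (j ≤ ·.stage) = J.countP (·.stage = j) + J.countP (j < ·.stage) := by
  induction J with
  | nil => rfl
  | cons e J ih =>
    simp only [List.countP_cons, ih, decide_eq_true_eq]
    split_ifs <;> omega

/-- A bound on the number of segments in the last `d` stages of a shortest plan, for `K` states. -/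
def planBound (K : ℕ) : ℕ → ℕ
  | 0 => 0
  | d + 1 => planBound K d + K * (planBound K d + 1)

theorem length_le_planBound {K k : ℕ} {J : List (Segment Q)} (hJ : ∀ e ∈ J, e.stage ≤ k)
    (hshort : ∀ j ≤ k, J.countP (·.stage = j) ≤ K * (J.countP (j < ·.stage) + 1)) :
    J.length ≤ planBound K (k + 1) := by
  suffices h : ∀ d j, j + d = k + 1 → J.countP (j ≤ ·.stage) ≤ planBound K d by
    simpa using h (k + 1) 0 (zero_add _)
  intro d
  induction d with
  | zero =>
    intro j hj
    refine (List.countP_eq_zero.2 fun e he => ?_).le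
    have := hJ e he
    simp only [decide_eq_true_eq]
    omega
  | succ d ih =>
    intro j hj
    have hlate := ih (j + 1) (by omega)
    have hstage := (hshort j (by omega)).trans (Nat.mul_le_mul_left K (Nat.succ_le_succ hlate))
    rw [planBound, countP_le_stage, add_comm]
    exact add_le_add hlate hstage

theorem Schedule.exists_length_le {k : ℕ} {q q' : Q} {L : Multiset (Segment Q) → Prop}
    {J : List (Segment Q)} (hq : q ∈ S) (hS : ∀ I, L I → ∀ e ∈ I, e.tgt ∈ S)
    (hprune : ∀ I j, L I → Prunable j L I) (hJ : Schedule 0 q J k q') (hL : L J) :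
    ∃ J', Schedule 0 q J' k q' ∧ L J' ∧ J'.length ≤ planBound S.card (k + 1) := by
  induction hn : J.length using Nat.strong_induction_on generalizing J with
  | _ n ih =>
    by_cases hlong : ∃ j ≤ k,
        S.card * (J.countP (j < ·.stage) + 1) ≤ J.countP (·.stage = j)
    · obtain ⟨j, hjk, hj⟩ := hlong
      obtain ⟨J', hJ', hL', hlt⟩ :=
        hJ.exists_shorter hq (hS J hL) (hprune J j hL) (Nat.zero_le j) hjk hj
      exact ih _ (hn ▸ hlt) hJ' hL' rfl
    · push Not at hlong
      exact ⟨J, hJ, hL, length_le_planBound hJ.stage_le fun j hj => (hlong j hj).le⟩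

end SmallModel

section Derivations

/-- The least set closed under the inference relation `R`, where `R l b` means that `b` may be
inferred from the premises `l`. -/
inductive Derives {β : Type*} (R : List β → β → Prop) : β → Prop
  | intro {l b} : R l b → (∀ a ∈ l, Derives R a) → Derives R b

theorem forall_mem_pair {β : Type*} {p : β → Prop} {a a' : β} :
    (∀ b ∈ [a, a'], p b) ↔ p a ∧ p a' := by
  rw [List.forall_mem_cons, List.forall_mem_singleton]

namespace Derives

variable {β : Type*} {R : List β → β → Prop} {a a' b : β}

theorem of_nil (h : R [] b) : Derives R b := .intro h (List.forall_mem_nil _)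

theorem of_singleton (h : R [a] b) (ha : Derives R a) : Derives R b :=
  .intro h (List.forall_mem_singleton.2 ha)

theorem of_pair (h : R [a, a'] b) (ha : Derives R a) (ha' : Derives R a') : Derives R b :=
  .intro h (forall_mem_pair.2 ⟨ha, ha'⟩)

end Derives

variable {Q Γ : Type*} {M : DCPS Q Γ}

/-- A thread in phase `src` can pop `word` and then be in phase `tgt`, where `segs` are the
segments begun meanwhile by the thread and, throughout, by the threads it spawns. The target
phase `dead` stands for a thread that is never resumed again, whatever its stack. -/
structure Fact (Q Γ : Type*) where
  src : Phase Q
  word : List Γ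
  segs : List (Segment Q)
  tgt : Phase Q

/-- Inference rules for facts, a saturation procedure for pushdown systems. The segments occur in
the order in which the rules list them, which is unrelated to that of their execution. -/
inductive Inference (M : DCPS Q Γ) : List (Fact Q Γ) → Fact Q Γ → Prop
  | nil (φ) : Inference M [] ⟨φ, [], [], φ⟩
  | dead (w) : Inference M [] ⟨.dead, w, [], .dead⟩
  | halt (i w) : Inference M [] ⟨.idle i, w, [], .dead⟩
  | res {i q γ q₁} (q' I φ) : Rule.res q γ q₁ ∈ M.rules →
      Inference M [⟨.active i q₁ q', [γ], I, φ⟩] ⟨.idle i, [γ], ⟨i, q, q'⟩ :: I, φ⟩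
  | cr {q γ q₁ u} (i q' I φ) : Rule.cr q γ q₁ u none ∈ M.rules →
      Inference M [⟨.active i q₁ q', u, I, φ⟩] ⟨.active i q q', [γ], I, φ⟩
  | spawn {q γ q₁ u a} (i q' I₁ I₂ φ) : Rule.cr q γ q₁ u (some a) ∈ M.rules →
      Inference M [⟨.idle (i + 1), [a], I₁, .dead⟩, ⟨.active i q₁ q', u, I₂, φ⟩]
        ⟨.active i q q', [γ], I₁ ++ I₂, φ⟩
  | intr {q γ q' u} (i I φ) : Rule.intr q γ q' u ∈ M.rules →
      Inference M [⟨.idle (i + 1), u, I, φ⟩] ⟨.active i q q', [γ], I, φ⟩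
  | cons (φ γ I₁ φ₁ w I₂ φ₂) :
      Inference M [⟨φ, [γ], I₁, φ₁⟩, ⟨φ₁, w, I₂, φ₂⟩] ⟨φ, γ :: w, I₁ ++ I₂, φ₂⟩

theorem Derives.append {φ ψ : Phase Q} {u w : List Γ} {I : List (Segment Q)}
    (h : Derives (Inference M) ⟨φ, u ++ w, I, ψ⟩) :
    ∃ I₁ φ' I₂, I = I₁ ++ I₂ ∧ Derives (Inference M) ⟨φ, u, I₁, φ'⟩ ∧
      Derives (Inference M) ⟨φ', w, I₂, ψ⟩ := by
  induction u generalizing φ I with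
  | nil => exact ⟨[], φ, I, rfl, .of_nil (.nil φ), h⟩
  | cons γ u ih =>
    have of_singleton (hnil : u ++ w = []) :
        ∃ I₁ φ' I₂, I = I₁ ++ I₂ ∧ Derives (Inference M) ⟨φ, γ :: u, I₁, φ'⟩ ∧
          Derives (Inference M) ⟨φ', w, I₂, ψ⟩ := by
      obtain ⟨rfl, rfl⟩ := List.append_eq_nil_iff.1 hnil
      exact ⟨I, ψ, [], (List.append_nil I).symm, h, .of_nil (.nil ψ)⟩
    obtain ⟨hR, hl⟩ := h
    generalize hv : γ :: u ++ w = v at hR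
    cases hR with
    | nil => cases hv
    | dead => exact ⟨[], .dead, [], rfl, .of_nil (.dead _), .of_nil (.dead _)⟩
    | halt => exact ⟨[], .dead, [], rfl, .of_nil (.halt _ _), .of_nil (.dead _)⟩
    | res | cr | spawn | intr => exact of_singleton (List.cons.inj hv).2
    | cons _ _ I₁ φ₁ _ I₂ =>
      obtain ⟨rfl, rfl⟩ := List.cons.inj hv
      obtain ⟨h₁, h₂⟩ := forall_mem_pair.1 hl
      obtain ⟨I₃, φ', I₄, rfl, h₃, h₄⟩ := ih h₂
      exact ⟨I₁ ++ I₃, φ', I₄, (List.append_assoc _ _ _).symm, .of_pair (.cons ..) h₁ h₃, h₄⟩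

theorem Derives.life {f : Fact Q Γ} (h : Derives (Inference M) f) {v : List Γ}
    {N : Multiset (Segment Q)} (hv : Life M f.tgt v N) :
    Life M f.src (f.word ++ v) (f.segs + N) := by
  induction h generalizing v N with
  | @intro l f hR _ ih =>
    cases hR with
    | nil => simpa using hv
    | dead w => cases hv; exact .dead _
    | halt i w => cases hv; exact .halt _ _
    | res q' I φ hr =>
      rw [← Multiset.cons_coe, Multiset.cons_add]
      exact .res hr (List.forall_mem_singleton.1 ih hv)
    | cr i q' I φ hr => exact .cr hr (List.forall_mem_singleton.1 ih hv)
    | @spawn _ _ _ _ a i q' I₁ I₂ φ hr =>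
      obtain ⟨ih₁, ih₂⟩ := forall_mem_pair.1 ih
      have hchild : Life M (.idle (i + 1)) [a] I₁ := by simpa using ih₁ (.dead [])
      rw [← Multiset.coe_add, add_assoc]
      exact .spawn hr hchild (ih₂ hv)
    | intr i I φ hr => exact .intr hr (List.forall_mem_singleton.1 ih hv)
    | cons φ γ I₁ φ₁ w I₂ φ₂ =>
      obtain ⟨ih₁, ih₂⟩ := forall_mem_pair.1 ih
      rw [← Multiset.coe_add, add_assoc]
      exact ih₁ (ih₂ hv)

theorem Life.exists_derives {φ w N} (h : Life M φ w N) :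
    ∃ I : List (Segment Q), (I : Multiset (Segment Q)) = N ∧
      Derives (Inference M) ⟨φ, w, I, .dead⟩ := by
  induction h with
  | dead w => exact ⟨[], rfl, .of_nil (.dead w)⟩
  | halt i w => exact ⟨[], rfl, .of_nil (.halt i w)⟩
  | @res i q γ q₁ q' w I hr _ ih =>
    obtain ⟨_, rfl, h⟩ := ih
    obtain ⟨I₁, φ, I₂, rfl, h₁, h₂⟩ := h.append (u := [γ])
    exact ⟨⟨i, q, q'⟩ :: (I₁ ++ I₂), rfl,
      .of_pair (.cons _ γ (_ :: I₁) φ w I₂ _) (.of_singleton (.res _ _ _ hr) h₁) h₂⟩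
  | cr hr _ ih =>
    obtain ⟨_, rfl, h⟩ := ih
    obtain ⟨I₁, φ, I₂, rfl, h₁, h₂⟩ := h.append
    exact ⟨I₁ ++ I₂, rfl, .of_pair (.cons ..) (.of_singleton (.cr _ _ _ _ hr) h₁) h₂⟩
  | spawn hr _ _ ih₁ ih₂ =>
    obtain ⟨I, rfl, h⟩ := ih₁
    obtain ⟨_, rfl, h'⟩ := ih₂
    obtain ⟨I₁, φ, I₂, rfl, h₁, h₂⟩ := h'.append
    refine ⟨I ++ I₁ ++ I₂, ?_, .of_pair (.cons ..) (.of_pair (.spawn _ _ _ _ _ hr) h h₁) h₂⟩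
    rw [List.append_assoc, Multiset.coe_add]
  | intr hr _ ih =>
    obtain ⟨_, rfl, h⟩ := ih
    obtain ⟨I₁, φ, I₂, rfl, h₁, h₂⟩ := h.append
    exact ⟨I₁ ++ I₂, rfl, .of_pair (.cons ..) (.of_singleton (.intr _ _ _ hr) h₁) h₂⟩

theorem life_iff_derives {φ w} {I : Multiset (Segment Q)} :
    Life M φ w I ↔ ∃ J : List (Segment Q), (J : Multiset (Segment Q)) = I ∧
      Derives (Inference M) ⟨φ, w, J, .dead⟩ := by
  refine ⟨Life.exists_derives, ?_⟩
  rintro ⟨J, rfl, h⟩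
  simpa using h.life (.dead [])

end Derivations

section HornClauses

/-- The lists of length at most `n` with entries in `L`. -/
def listsUpTo {β : Type*} (L : List β) : ℕ → List (List β)
  | 0 => [[]]
  | n + 1 => [] :: (L ×ˢ listsUpTo L n).map fun p => p.1 :: p.2

@[simp]
theorem mem_listsUpTo {β : Type*} {L l : List β} {n : ℕ} :
    l ∈ listsUpTo L n ↔ l.length ≤ n ∧ ∀ a ∈ l, a ∈ L := by
  induction n generalizing l with
  | zero => cases l <;> simp [listsUpTo]
  | succ n ih => cases l <;> simp [listsUpTo, ih, and_left_comm]

theorem mem_listsUpTo_of_sublist {β : Type*} {L l l' : List β} {n : ℕ} (hl : l ∈ listsUpTo L n)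
    (h : l'.Sublist l) : l' ∈ listsUpTo L n := by
  obtain ⟨hlen, hL⟩ := mem_listsUpTo.1 hl
  exact mem_listsUpTo.2 ⟨h.length_le.trans hlen, fun a ha => hL a (h.subset ha)⟩

/-- `T` is a model of the Horn clauses `H`, where `(l, b)` is the clause with body `l` and
head `b`. -/
def IsModel {β : Type*} (H : List (List β × β)) (T : List β) : Prop :=
  ∀ c ∈ H, (∀ a ∈ c.1, a ∈ T) → c.2 ∈ T

theorem derives_iff_forall_isModel {β : Type*} {H : List (List β × β)} {b : β} :
    Derives (fun l b => (l, b) ∈ H) b ↔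
      ∀ T ∈ listsUpTo (H.map Prod.snd) H.length, IsModel H T → b ∈ T := by
  classical
  constructor
  · intro h T _ hT
    induction h with
    | intro hc _ ih => exact hT _ hc ih
  · intro h
    let T := (H.map Prod.snd).filter (Derives fun l b => (l, b) ∈ H)
    have hT {a : β} : a ∈ T ↔ Derives (fun l b => (l, b) ∈ H) a := by
      simp only [T, List.mem_filter, decide_eq_true_eq, and_iff_right_iff_imp]
      rintro ⟨hc, -⟩
      exact List.mem_map_of_mem hc
    have hlen : T.length ≤ H.length := (List.length_filter_le _ _).trans (List.length_map _).le
    refine hT.1 (h T (mem_listsUpTo.2 ⟨hlen, fun a ha => List.mem_of_mem_filter ha⟩) ?_)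
    exact fun c hc hl => hT.2 (.intro hc fun a ha => hT.1 (hl a ha))

end HornClauses

section Saturation

variable {K k N : ℕ}

/-- The segments of stage at most `k` between states below `K`. -/
def segments (K k : ℕ) : List (Segment ℕ) :=
  (List.range (k + 1) ×ˢ List.range K ×ˢ List.range K).map fun p => ⟨p.1, p.2.1, p.2.2⟩

@[simp]
theorem mem_segments {e : Segment ℕ} :
    e ∈ segments K k ↔ e.stage ≤ k ∧ e.src < K ∧ e.tgt < K := by
  obtain ⟨i, q, q'⟩ := e
  simp [segments]

/-- The phases that a thread can be in up to stage `k`, for states below `K`. -/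
def phases (K k : ℕ) : List (Phase ℕ) :=
  .dead :: ((List.range (k + 2)).map .idle ++
    (segments K k).map fun e => .active e.stage e.src e.tgt)

@[simp]
theorem dead_mem_phases : .dead ∈ phases K k := List.mem_cons_self

@[simp]
theorem idle_mem_phases {i : ℕ} : .idle i ∈ phases K k ↔ i ≤ k + 1 := by
  simp [phases, Nat.lt_succ_iff]

@[simp]
theorem active_mem_phases {i q q' : ℕ} :
    .active i q q' ∈ phases K k ↔ i ≤ k ∧ q < K ∧ q' < K := by
  simp only [phases, List.mem_cons, List.mem_append, List.mem_map, reduceCtorEq, and_false,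
    exists_false, false_or, Phase.active.injEq, mem_segments]
  constructor
  · rintro ⟨e, he, rfl, rfl, rfl⟩
    exact he
  · exact fun h => ⟨⟨i, q, q'⟩, h, rfl, rfl, rfl⟩

/-- The words of length at most `K` over the symbols below `K`. -/
def words (K : ℕ) : List (List ℕ) := listsUpTo (List.range K) K

/-- The lists of at most `N` segments of stage at most `k` between states below `K`. -/
def segmentLists (K k N : ℕ) : List (List (Segment ℕ)) := listsUpTo (segments K k) N

/-- The facts to which saturation can be restricted. -/
structure Fact.Bounded (K k N : ℕ) (f : Fact ℕ ℕ) : Prop where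
  src : f.src ∈ phases K k
  word : f.word ∈ words K
  segs : f.segs ∈ segmentLists K k N
  tgt : f.tgt ∈ phases K k

variable {M : DCPS ℕ ℕ}

theorem Derives.tgt_mem_phases (hM : M.Within (Finset.range K) (Finset.range K) K) {f : Fact ℕ ℕ}
    (h : Derives (Inference M) f) (hsrc : f.src ∈ phases K k)
    (hsegs : ∀ e ∈ f.segs, e ∈ segments K k) : f.tgt ∈ phases K k := by
  induction h with
  | intro hR _ ih =>
    cases hR with
    | nil => exact hsrc
    | dead | halt => exact dead_mem_phases
    | res q' I φ hr =>
      obtain ⟨he, hI⟩ := List.forall_mem_cons.1 hsegs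
      obtain ⟨hi, -, hq'⟩ := mem_segments.1 he
      have hq₁ := Finset.mem_range.1 (hM.res hr).2
      exact List.forall_mem_singleton.1 ih (active_mem_phases.2 ⟨hi, hq₁, hq'⟩) hI
    | cr i q' I φ hr =>
      obtain ⟨hi, -, hq'⟩ := active_mem_phases.1 hsrc
      have hq₁ := Finset.mem_range.1 (hM.cr hr).1
      exact List.forall_mem_singleton.1 ih (active_mem_phases.2 ⟨hi, hq₁, hq'⟩) hsegs
    | spawn i q' I₁ I₂ φ hr =>
      obtain ⟨hi, -, hq'⟩ := active_mem_phases.1 hsrc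
      have hq₁ := Finset.mem_range.1 (hM.cr hr).1
      exact (forall_mem_pair.1 ih).2 (active_mem_phases.2 ⟨hi, hq₁, hq'⟩)
        (List.forall_mem_append.1 hsegs).2
    | intr i I φ hr =>
      have hi := (active_mem_phases.1 hsrc).1
      exact List.forall_mem_singleton.1 ih (idle_mem_phases.2 (Nat.succ_le_succ hi)) hsegs
    | cons =>
      obtain ⟨ih₁, ih₂⟩ := forall_mem_pair.1 ih
      obtain ⟨hI₁, hI₂⟩ := List.forall_mem_append.1 hsegs
      exact ih₂ (ih₁ hsrc hI₁) hI₂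

theorem Inference.bounded (hM : M.Within (Finset.range K) (Finset.range K) K) {l f}
    (hR : Inference M l f) (hl : ∀ a ∈ l, Derives (Inference M) a) (hf : f.Bounded K k N) :
    ∀ a ∈ l, a.Bounded K k N := by
  obtain ⟨hsrc, hword, hsegs, htgt⟩ := hf
  cases hR with
  | nil | dead | halt => exact List.forall_mem_nil _
  | res q' I φ hr =>
    obtain ⟨hi, -, hq'⟩ := mem_segments.1 ((mem_listsUpTo.1 hsegs).2 _ List.mem_cons_self)
    have hq₁ := Finset.mem_range.1 (hM.res hr).2
    exact List.forall_mem_singleton.2 ⟨active_mem_phases.2 ⟨hi, hq₁, hq'⟩, hword,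
      mem_listsUpTo_of_sublist hsegs (List.sublist_cons_self _ _), htgt⟩
  | cr i q' I φ hr =>
    obtain ⟨hi, -, hq'⟩ := active_mem_phases.1 hsrc
    obtain ⟨hq₁, hlen, hu, -⟩ := hM.cr hr
    exact List.forall_mem_singleton.2 ⟨active_mem_phases.2 ⟨hi, Finset.mem_range.1 hq₁, hq'⟩,
      mem_listsUpTo.2 ⟨hlen, by simpa using hu⟩, hsegs, htgt⟩
  | spawn i q' I₁ I₂ φ hr =>
    obtain ⟨hi, -, hq'⟩ := active_mem_phases.1 hsrc
    obtain ⟨hq₁, hlen, hu, ha⟩ := hM.cr hr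
    refine forall_mem_pair.2 ⟨⟨idle_mem_phases.2 (Nat.succ_le_succ hi), ?_,
        mem_listsUpTo_of_sublist hsegs (List.sublist_append_left _ _), dead_mem_phases⟩,
      ⟨active_mem_phases.2 ⟨hi, Finset.mem_range.1 hq₁, hq'⟩, ?_,
        mem_listsUpTo_of_sublist hsegs (List.sublist_append_right _ _), htgt⟩⟩
    · exact mem_listsUpTo.2 ⟨(mem_listsUpTo.1 hword).1, by simpa using ha⟩
    · exact mem_listsUpTo.2 ⟨hlen, by simpa using hu⟩
  | intr i I φ hr =>
    have hi := (active_mem_phases.1 hsrc).1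
    obtain ⟨-, hlen, hu⟩ := hM.intr hr
    exact List.forall_mem_singleton.2 ⟨idle_mem_phases.2 (Nat.succ_le_succ hi),
      mem_listsUpTo.2 ⟨hlen, by simpa using hu⟩, hsegs, htgt⟩
  | cons φ γ I₁ φ₁ w I₂ φ₂ =>
    have hI₁ := mem_listsUpTo_of_sublist hsegs (List.sublist_append_left _ _)
    have hI₂ := mem_listsUpTo_of_sublist hsegs (List.sublist_append_right _ _)
    have hφ₁ :=
      (forall_mem_pair.1 hl).1.tgt_mem_phases hM hsrc (mem_listsUpTo.1 hI₁).2
    exact forall_mem_pair.2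
      ⟨⟨hsrc, mem_listsUpTo_of_sublist hword (by simp), hI₁, hφ₁⟩,
        ⟨hφ₁, mem_listsUpTo_of_sublist hword (List.sublist_cons_self _ _), hI₂, htgt⟩⟩

/-- A Horn clause for facts. -/
abbrev Clause : Type := List (Fact ℕ ℕ) × Fact ℕ ℕ

/-- The inferences without premises between bounded facts. -/
def baseClauses (K k : ℕ) : List Clause :=
  (phases K k).map (fun φ => ([], ⟨φ, [], [], φ⟩)) ++
  (words K).map (fun w => ([], ⟨.dead, w, [], .dead⟩)) ++
  (List.range (k + 2) ×ˢ words K).map (fun p => ([], ⟨.idle p.1, p.2, [], .dead⟩))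

/-- The inferences between bounded facts that are due to an encoded rule. -/
def ruleClauses (K k N : ℕ) : RuleE → List Clause
  | .inl ((q, γ), (q₁, u), none) =>
    (List.range (k + 1) ×ˢ List.range K ×ˢ segmentLists K k N ×ˢ phases K k).map
      fun (i, q', I, φ) => ([⟨.active i q₁ q', u, I, φ⟩], ⟨.active i q q', [γ], I, φ⟩)
  | .inl ((q, γ), (q₁, u), some a) =>
    (List.range (k + 1) ×ˢ List.range K ×ˢ segmentLists K k N ×ˢ segmentLists K k N ×ˢ
      phases K k).map fun (i, q', I₁, I₂, φ) =>
        ([⟨.idle (i + 1), [a], I₁, .dead⟩, ⟨.active i q₁ q', u, I₂, φ⟩],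
          ⟨.active i q q', [γ], I₁ ++ I₂, φ⟩)
  | .inr (.inl ((q, γ), (q', u))) =>
    (List.range (k + 1) ×ˢ segmentLists K k N ×ˢ phases K k).map
      fun (i, I, φ) => ([⟨.idle (i + 1), u, I, φ⟩], ⟨.active i q q', [γ], I, φ⟩)
  | .inr (.inr (q, γ, q₁)) =>
    (List.range (k + 1) ×ˢ List.range K ×ˢ segmentLists K k N ×ˢ phases K k).map
      fun (i, q', I, φ) => ([⟨.active i q₁ q', [γ], I, φ⟩], ⟨.idle i, [γ], ⟨i, q, q'⟩ :: I, φ⟩)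

/-- The inferences between bounded facts that compose two of them. -/
def consClauses (K k N : ℕ) : List Clause :=
  (phases K k ×ˢ List.range K ×ˢ segmentLists K k N ×ˢ phases K k ×ˢ words K ×ˢ
    segmentLists K k N ×ˢ phases K k).map fun (φ, γ, I₁, φ₁, w, I₂, φ₂) =>
      ([⟨φ, [γ], I₁, φ₁⟩, ⟨φ₁, w, I₂, φ₂⟩], ⟨φ, γ :: w, I₁ ++ I₂, φ₂⟩)

/-- Horn clauses for the inferences between bounded facts. -/
def clauses (K k N : ℕ) (rules : List RuleE) : List Clause :=
  baseClauses K k ++ consClauses K k N ++ rules.flatMap (ruleClauses K k N)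

theorem decodeRule_injective : Function.Injective decodeRule := by
  rintro (⟨⟨_, _⟩, ⟨_, _⟩, _⟩ | ⟨⟨_, _⟩, _, _⟩ | ⟨_, _, _⟩)
    (⟨⟨_, _⟩, ⟨_, _⟩, _⟩ | ⟨⟨_, _⟩, _, _⟩ | ⟨_, _, _⟩) h <;> simp_all [decodeRule]

theorem decodeRule_mem_rules {x : Inst} {e : RuleE} :
    decodeRule e ∈ (instDCPS x).rules ↔ e ∈ x.1 :=
  ⟨fun ⟨_, he, h⟩ => decodeRule_injective h ▸ he, fun he => ⟨e, he, rfl⟩⟩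

theorem inference_of_mem_clauses {x : Inst} {l f} (h : (l, f) ∈ clauses K k N x.1) :
    Inference (instDCPS x) l f := by
  simp only [clauses, List.mem_append, List.mem_flatMap] at h
  rcases h with (h | h) | ⟨e, he, h⟩
  · simp only [baseClauses, List.mem_append, List.mem_map, Prod.mk.injEq] at h
    rcases h with (⟨φ, -, rfl, rfl⟩ | ⟨w, -, rfl, rfl⟩) | ⟨p, -, rfl, rfl⟩
    exacts [.nil φ, .dead w, .halt _ _]
  · simp only [consClauses, List.mem_map, Prod.mk.injEq] at h
    obtain ⟨p, -, rfl, rfl⟩ := h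
    exact .cons ..
  · have hr : decodeRule e ∈ (instDCPS x).rules := ⟨e, he, rfl⟩
    rcases e with ⟨⟨q, γ⟩, ⟨q₁, u⟩, _ | a⟩ | ⟨⟨q, γ⟩, q', u⟩ | ⟨q, γ, q₁⟩ <;>
      simp only [ruleClauses, List.mem_map, Prod.mk.injEq] at h <;>
      obtain ⟨p, -, rfl, rfl⟩ := h
    exacts [.cr _ _ _ _ hr, .spawn _ _ _ _ _ hr, .intr _ _ _ hr, .res _ _ _ hr]

theorem Inference.mem_clauses {x : Inst} {l f} (h : Inference (instDCPS x) l f)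
    (hf : f.Bounded K k N) (hl : ∀ a ∈ l, a.Bounded K k N) : (l, f) ∈ clauses K k N x.1 := by
  obtain ⟨hsrc, hword, hsegs, htgt⟩ := hf
  have of_base (h : (l, f) ∈ baseClauses K k) : (l, f) ∈ clauses K k N x.1 :=
    List.mem_append_left _ (List.mem_append_left _ h)
  have of_rule {e : RuleE} (he : decodeRule e ∈ (instDCPS x).rules)
      (h : (l, f) ∈ ruleClauses K k N e) : (l, f) ∈ clauses K k N x.1 :=
    List.mem_append_right _ (List.mem_flatMap.2 ⟨e, decodeRule_mem_rules.1 he, h⟩)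
  cases h with
  | nil φ => exact of_base (by simp [baseClauses, hsrc])
  | dead w => exact of_base (by simp [baseClauses, hword])
  | halt i w =>
    rw [idle_mem_phases] at hsrc
    exact of_base (by simp [baseClauses, hword, Nat.lt_succ_iff, hsrc])
  | @res i q γ q₁ q' I φ hr =>
    obtain ⟨hφ, -, hI, -⟩ := List.forall_mem_singleton.1 hl
    obtain ⟨hi, -, hq'⟩ := active_mem_phases.1 hφ
    exact of_rule (e := .inr (.inr (q, γ, q₁))) hr
      (List.mem_map.2 ⟨(i, q', I, φ), by simp [hi, hq', hI, htgt], rfl⟩)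
  | @cr q γ q₁ u i q' I φ hr =>
    obtain ⟨hi, -, hq'⟩ := active_mem_phases.1 hsrc
    exact of_rule (e := .inl ((q, γ), (q₁, u), none)) hr
      (List.mem_map.2 ⟨(i, q', I, φ), by simp [hi, hq', hsegs, htgt], rfl⟩)
  | @spawn q γ q₁ u a i q' I₁ I₂ φ hr =>
    obtain ⟨hi, -, hq'⟩ := active_mem_phases.1 hsrc
    obtain ⟨⟨-, -, hI₁, -⟩, ⟨-, -, hI₂, -⟩⟩ := forall_mem_pair.1 hl
    exact of_rule (e := .inl ((q, γ), (q₁, u), some a)) hr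
      (List.mem_map.2 ⟨(i, q', I₁, I₂, φ), by simp [hi, hq', hI₁, hI₂, htgt], rfl⟩)
  | @intr q γ q' u i I φ hr =>
    have hi := (active_mem_phases.1 hsrc).1
    exact of_rule (e := .inr (.inl ((q, γ), (q', u)))) hr
      (List.mem_map.2 ⟨(i, I, φ), by simp [hi, hsegs, htgt], rfl⟩)
  | cons φ γ I₁ φ₁ w I₂ φ₂ =>
    obtain ⟨⟨-, -, hI₁, hφ₁⟩, ⟨-, hw, hI₂, -⟩⟩ := forall_mem_pair.1 hl
    have hγ : γ < K := List.mem_range.1 ((mem_listsUpTo.1 hword).2 γ List.mem_cons_self)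
    refine List.mem_append_left _ (List.mem_append_right _ (List.mem_map.2
      ⟨(φ, γ, I₁, φ₁, w, I₂, φ₂), ?_, rfl⟩))
    simp [hsrc, hγ, hI₁, hφ₁, hw, hI₂, htgt]

theorem derives_inference_iff {x : Inst}
    (hM : (instDCPS x).Within (Finset.range K) (Finset.range K) K) {f : Fact ℕ ℕ}
    (hf : f.Bounded K k N) :
    Derives (Inference (instDCPS x)) f ↔ Derives (fun l f => (l, f) ∈ clauses K k N x.1) f := by
  constructor
  · intro h
    induction h with
    | intro hR hl ih =>
      have hbd := hR.bounded hM hl hf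
      exact .intro (hR.mem_clauses hf hbd) fun a ha => ih a ha (hbd a ha)
  · intro h
    clear hf
    induction h with
    | intro hc _ ih => exact .intro (inference_of_mem_clauses hc) ih

end Saturation

section Encoding

open Encodable

variable {α β : Type*} [Encodable α] [Encodable β]

theorem encode_fst_le (p : α × β) : encode p.1 ≤ encode p := Nat.left_le_pair _ _

theorem encode_snd_le (p : α × β) : encode p.2 ≤ encode p := Nat.right_le_pair _ _

theorem encode_le_encode_inl (a : α) : encode a ≤ encode (.inl a : α ⊕ β) := by
  rw [encode_inl]; omega

theorem encode_le_encode_inr (b : β) : encode b ≤ encode (.inr b : α ⊕ β) := by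
  rw [encode_inr]; omega

theorem encode_le_encode_of_mem {a : α} {l : List α} (h : a ∈ l) : encode a ≤ encode l := by
  induction l with
  | nil => cases h
  | cons b l ih =>
    rw [encode_list_cons]
    rcases List.mem_cons.1 h with rfl | h
    · exact (Nat.left_le_pair _ _).trans (Nat.le_succ _)
    · exact (ih h).trans ((Nat.right_le_pair _ _).trans (Nat.le_succ _))

/-- All numbers that occur in an instance, and the lengths of its words, are less than this. -/
def instBound (x : Inst) : ℕ := encode x + 1

theorem instDCPS_within (x : Inst) :
    (instDCPS x).Within (Finset.range (instBound x)) (Finset.range (instBound x))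
      (instBound x) := by
  have hrule {e : RuleE} (he : decodeRule e ∈ (instDCPS x).rules) : encode e ≤ encode x :=
    (encode_le_encode_of_mem (decodeRule_mem_rules.1 he)).trans (encode_fst_le x)
  have hinit : encode x.2.1 ≤ encode x := (encode_fst_le x.2).trans (encode_snd_le x)
  have hword {u : List ℕ} (hu : encode u ≤ encode x) : u.length ≤ instBound x ∧
      ∀ a ∈ u, a ∈ Finset.range (instBound x) :=
    ⟨((length_le_encode u).trans hu).trans (Nat.le_succ _), fun a ha =>
      Finset.mem_range_succ_iff.2 ((encode_le_encode_of_mem ha).trans hu)⟩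
  refine ⟨Finset.mem_range_succ_iff.2 ((encode_fst_le x.2.1).trans hinit),
    Finset.mem_range_succ_iff.2 ((encode_snd_le x.2.1).trans hinit), ?_, ?_, ?_⟩
  · intro q γ q' u α hr
    have he := (encode_le_encode_inl _).trans (hrule (e := .inl ((q, γ), (q', u), α)) hr)
    have hrhs : encode ((q', u), α) ≤ encode x := (encode_snd_le _).trans he
    have hqu : encode (q', u) ≤ encode x := (encode_fst_le _).trans hrhs
    obtain ⟨hlen, hu⟩ := hword ((encode_snd_le _).trans hqu)
    refine ⟨Finset.mem_range_succ_iff.2 ((encode_fst_le _).trans hqu), hlen, hu, ?_⟩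
    rintro a rfl
    have hα : encode (some a) ≤ encode x := (encode_snd_le _).trans hrhs
    rw [encode_some] at hα
    exact Finset.mem_range_succ_iff.2 ((Nat.le_succ _).trans hα)
  · intro q γ q' u hr
    have he := (encode_le_encode_inl _).trans
      ((encode_le_encode_inr _).trans (hrule (e := .inr (.inl ((q, γ), (q', u)))) hr))
    have hqu : encode (q', u) ≤ encode x := (encode_snd_le _).trans he
    exact ⟨Finset.mem_range_succ_iff.2 ((encode_fst_le _).trans hqu),
      hword ((encode_snd_le _).trans hqu)⟩
  · intro q γ q' hr
    have he := (encode_le_encode_inr _).trans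
      ((encode_le_encode_inr _).trans (hrule (e := .inr (.inr (q, γ, q'))) hr))
    exact ⟨Finset.mem_range_succ_iff.2 ((encode_fst_le _).trans he),
      Finset.mem_range_succ_iff.2 ((encode_snd_le (γ, q')).trans ((encode_snd_le _).trans he))⟩

end Encoding

section Decision

/-- A bound on the length of a shortest plan for an instance. -/
def lengthBound (k : ℕ) (x : Inst) : ℕ := planBound (instBound x) (k + 1)

/-- The segments that a plan for an instance may use, in lists of bounded length. -/
def instSegmentLists (k : ℕ) (x : Inst) : List (List (Segment ℕ)) :=
  segmentLists (instBound x) k (lengthBound k x)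

/-- The Horn clauses for an instance. -/
def instClauses (k : ℕ) (x : Inst) : List Clause :=
  clauses (instBound x) k (lengthBound k x) x.1

/-- The fact that the initial thread can begin the segments `I`. -/
def initFact (x : Inst) (I : List (Segment ℕ)) : Fact ℕ ℕ := ⟨.idle 0, [x.2.1.2], I, .dead⟩

theorem life_iff_derives_clauses {k : ℕ} {x : Inst} {J : List (Segment ℕ)}
    (hJ : J ∈ instSegmentLists k x) :
    Life (instDCPS x) (.idle 0) [(instDCPS x).γ0] J ↔
      ∃ I ∈ instSegmentLists k x, I.Perm J ∧
        Derives (fun l f => (l, f) ∈ instClauses k x) (initFact x I) := by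
  have hM := instDCPS_within x
  have hbounded {I} (hI : I ∈ instSegmentLists k x) :
      (initFact x I).Bounded (instBound x) k (lengthBound k x) := by
    refine ⟨idle_mem_phases.2 (Nat.zero_le _),
      mem_listsUpTo.2 ⟨Nat.succ_le_succ (Nat.zero_le _), ?_⟩, hI, dead_mem_phases⟩
    exact List.forall_mem_singleton.2 (List.mem_range.2 (Finset.mem_range.1 hM.γ0))
  have hperm {I : List (Segment ℕ)} (h : I.Perm J) : I ∈ instSegmentLists k x := by
    obtain ⟨hlen, hmem⟩ := mem_listsUpTo.1 hJ
    exact mem_listsUpTo.2 ⟨h.length_eq.trans_le hlen, fun e he => hmem e (h.mem_iff.1 he)⟩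
  rw [life_iff_derives]
  constructor
  · rintro ⟨I, hI, h⟩
    have hI := Multiset.coe_eq_coe.1 hI
    exact ⟨I, hperm hI, hI, (derives_inference_iff hM (hbounded (hperm hI))).1 h⟩
  · rintro ⟨I, hmem, hI, h⟩
    exact ⟨I, Multiset.coe_eq_coe.2 hI, (derives_inference_iff hM (hbounded hmem)).2 h⟩

theorem kStratifiedReachable_iff_bounded {k : ℕ} {x : Inst} {q : ℕ} :
    KStratifiedReachable (instDCPS x) k q ↔ ∃ J ∈ instSegmentLists k x,
      Schedule 0 x.2.1.1 J k q ∧ Life (instDCPS x) (.idle 0) [(instDCPS x).γ0] J := by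
  have hM := instDCPS_within x
  rw [kStratifiedReachable_iff]
  constructor
  · rintro ⟨J, hJ, hL⟩
    obtain ⟨J, hJ, hL, hlen⟩ := Schedule.exists_length_le hM.q0
      (fun I hI e he => (Life.states_mem hM hI e he).2)
      (fun I j hI => hI.prunable (by simp)) hJ hL
    rw [Finset.card_range] at hlen
    refine ⟨J, mem_listsUpTo.2 ⟨hlen, fun e he => mem_segments.2 ⟨hJ.stage_le e he, ?_⟩⟩, hJ, hL⟩
    simpa using hL.states_mem hM e he
  · exact fun ⟨J, _, hJ, hL⟩ => ⟨J, hJ, hL⟩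

end Decision

section PrimitiveRecursion

variable {α β γ σ : Type*} [Primcodable α] [Primcodable β] [Primcodable γ] [Primcodable σ]

attribute [fun_prop] Primrec Primrec.id Primrec.const Primrec.fst Primrec.snd Primrec.comp
  Primrec.pair Primrec.encode

@[fun_prop]
theorem primrec_fst {f : α → β × γ} (hf : Primrec f) : Primrec fun a => (f a).1 :=
  Primrec.fst.comp hf

@[fun_prop]
theorem primrec_snd {f : α → β × γ} (hf : Primrec f) : Primrec fun a => (f a).2 :=
  Primrec.snd.comp hf

@[fun_prop]
theorem primrec_add {f g : α → ℕ} (hf : Primrec f) (hg : Primrec g) :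
    Primrec fun a => f a + g a :=
  Primrec.nat_add.comp hf hg

@[fun_prop]
theorem primrec_mul {f g : α → ℕ} (hf : Primrec f) (hg : Primrec g) :
    Primrec fun a => f a * g a :=
  Primrec.nat_mul.comp hf hg

@[fun_prop]
theorem primrec_range {f : α → ℕ} (hf : Primrec f) : Primrec fun a => List.range (f a) :=
  Primrec.list_range.comp hf

@[fun_prop]
theorem primrec_cons {f : α → β} {g : α → List β} (hf : Primrec f) (hg : Primrec g) :
    Primrec fun a => f a :: g a :=
  Primrec.list_cons.comp hf hg

@[fun_prop]
theorem primrec_append {f g : α → List β} (hf : Primrec f) (hg : Primrec g) :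
    Primrec fun a => f a ++ g a :=
  Primrec.list_append.comp hf hg

@[fun_prop]
theorem primrec_length {f : α → List β} (hf : Primrec f) : Primrec fun a => (f a).length :=
  Primrec.list_length.comp hf

@[fun_prop]
theorem primrec_map {f : α → List β} {g : α → β → σ} (hf : Primrec f)
    (hg : Primrec fun p : α × β => g p.1 p.2) : Primrec fun a => (f a).map (g a) :=
  Primrec.list_map hf hg

@[fun_prop]
theorem primrec_flatMap {f : α → List β} {g : α → β → List σ} (hf : Primrec f)
    (hg : Primrec fun p : α × β => g p.1 p.2) : Primrec fun a => (f a).flatMap (g a) :=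
  Primrec.list_flatMap hf hg

@[fun_prop]
theorem primrec_product {f : α → List β} {g : α → List γ} (hf : Primrec f) (hg : Primrec g) :
    Primrec fun a => f a ×ˢ g a := by
  change Primrec fun a => (f a).flatMap fun b => (g a).map (Prod.mk b)
  fun_prop

@[fun_prop]
theorem primrec_listsUpTo {f : α → List β} {g : α → ℕ} (hf : Primrec f) (hg : Primrec g) :
    Primrec fun a => listsUpTo (f a) (g a) := by
  have hstep : Primrec₂ fun a (p : ℕ × List (List β)) =>
      [] :: (f a ×ˢ p.2).map fun p => p.1 :: p.2 := by
    unfold Primrec₂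
    fun_prop
  refine (Primrec.nat_rec' hg (Primrec.const [[]]) hstep).of_eq fun a => ?_
  induction g a with
  | zero => rfl
  | succ n ih => rw [listsUpTo, ← ih]

@[fun_prop]
theorem primrec_planBound {f d : α → ℕ} (hf : Primrec f) (hd : Primrec d) :
    Primrec fun a => planBound (f a) (d a) := by
  have hstep : Primrec₂ fun a (p : ℕ × ℕ) => p.2 + f a * (p.2 + 1) := by
    unfold Primrec₂
    fun_prop
  refine (Primrec.nat_rec' hd (Primrec.const 0) hstep).of_eq fun a => ?_
  induction d a with
  | zero => rfl
  | succ d ih => rw [planBound, ← ih]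

/-- Segments as triples. -/
def segmentEquiv (Q : Type*) : Segment Q ≃ ℕ × Q × Q where
  toFun e := (e.stage, e.src, e.tgt)
  invFun p := ⟨p.1, p.2.1, p.2.2⟩

instance : Primcodable (Segment α) := .ofEquiv _ (segmentEquiv α)

/-- Phases as elements of a sum of products. -/
def phaseEquiv (Q : Type*) : Phase Q ≃ Option (ℕ ⊕ ℕ × Q × Q) where
  toFun
    | .dead => none
    | .idle i => some (.inl i)
    | .active i q q' => some (.inr (i, q, q'))
  invFun
    | none => .dead
    | some (.inl i) => .idle i
    | some (.inr (i, q, q')) => .active i q q'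
  left_inv φ := by cases φ <;> rfl
  right_inv o := by rcases o with _ | _ | _ <;> rfl

instance : Primcodable (Phase α) := .ofEquiv _ (phaseEquiv α)

/-- Facts as quadruples. -/
def factEquiv (Q Γ : Type*) : Fact Q Γ ≃ Phase Q × List Γ × List (Segment Q) × Phase Q where
  toFun f := (f.src, f.word, f.segs, f.tgt)
  invFun p := ⟨p.1, p.2.1, p.2.2.1, p.2.2.2⟩

instance : Primcodable (Fact α β) := .ofEquiv _ (factEquiv α β)

@[fun_prop]
theorem primrec_segment_mk {f : α → ℕ} {g h : α → β} (hf : Primrec f) (hg : Primrec g)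
    (hh : Primrec h) : Primrec fun a => Segment.mk (f a) (g a) (h a) :=
  Primrec.of_equiv_symm.comp (hf.pair (hg.pair hh))

@[fun_prop]
theorem primrec_segment_stage {f : α → Segment β} (hf : Primrec f) :
    Primrec fun a => (f a).stage :=
  Primrec.fst.comp (Primrec.of_equiv (e := segmentEquiv β) |>.comp hf)

@[fun_prop]
theorem primrec_segment_src {f : α → Segment β} (hf : Primrec f) : Primrec fun a => (f a).src :=
  (Primrec.fst.comp Primrec.snd).comp (Primrec.of_equiv (e := segmentEquiv β) |>.comp hf)

@[fun_prop]
theorem primrec_segment_tgt {f : α → Segment β} (hf : Primrec f) : Primrec fun a => (f a).tgt :=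
  (Primrec.snd.comp Primrec.snd).comp (Primrec.of_equiv (e := segmentEquiv β) |>.comp hf)

@[fun_prop]
theorem primrec_phase_idle {f : α → ℕ} (hf : Primrec f) :
    Primrec fun a => (Phase.idle (f a) : Phase β) :=
  Primrec.of_equiv_symm.comp (Primrec.option_some.comp (Primrec.sumInl.comp hf))

@[fun_prop]
theorem primrec_phase_active {f : α → ℕ} {g h : α → β} (hf : Primrec f) (hg : Primrec g)
    (hh : Primrec h) : Primrec fun a => Phase.active (f a) (g a) (h a) :=
  Primrec.of_equiv_symm.comp
    (Primrec.option_some.comp (Primrec.sumInr.comp (hf.pair (hg.pair hh))))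

@[fun_prop]
theorem primrec_fact_mk {f h : α → Phase β} {g : α → List γ} {I : α → List (Segment β)}
    (hf : Primrec f) (hg : Primrec g) (hI : Primrec I) (hh : Primrec h) :
    Primrec fun a => Fact.mk (f a) (g a) (I a) (h a) :=
  Primrec.of_equiv_symm.comp (hf.pair (hg.pair (hI.pair hh)))

variable {K k N : α → ℕ}

@[fun_prop]
theorem primrec_segments (hK : Primrec K) (hk : Primrec k) :
    Primrec fun a => segments (K a) (k a) := by
  unfold segments
  fun_prop

@[fun_prop]
theorem primrec_phases (hK : Primrec K) (hk : Primrec k) : Primrec fun a => phases (K a) (k a) := by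
  unfold phases
  fun_prop

@[fun_prop]
theorem primrec_words (hK : Primrec K) : Primrec fun a => words (K a) := by
  unfold words
  fun_prop

@[fun_prop]
theorem primrec_segmentLists (hK : Primrec K) (hk : Primrec k) (hN : Primrec N) :
    Primrec fun a => segmentLists (K a) (k a) (N a) := by
  unfold segmentLists
  fun_prop

@[fun_prop]
theorem primrec_baseClauses (hK : Primrec K) (hk : Primrec k) :
    Primrec fun a => baseClauses (K a) (k a) := by
  unfold baseClauses
  fun_prop

@[fun_prop]
theorem primrec_consClauses (hK : Primrec K) (hk : Primrec k) (hN : Primrec N) :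
    Primrec fun a => consClauses (K a) (k a) (N a) := by
  unfold consClauses
  fun_prop

theorem primrec_of_option {f : α → Option β → σ} (hnone : Primrec fun a => f a none)
    (hsome : Primrec fun p : α × β => f p.1 (some p.2)) :
    Primrec fun p : α × Option β => f p.1 p.2 := by
  have hsome : Primrec₂ fun (p : α × Option β) b => f p.1 (some b) :=
    hsome.comp (by fun_prop : Primrec fun p : (α × Option β) × β => (p.1.1, p.2))
  refine (Primrec.option_casesOn Primrec.snd (hnone.comp Primrec.fst) hsome).of_eq ?_
  rintro ⟨a, _ | b⟩ <;> rfl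

theorem primrec_of_sum {f : α → β ⊕ γ → σ} (hinl : Primrec fun p : α × β => f p.1 (.inl p.2))
    (hinr : Primrec fun p : α × γ => f p.1 (.inr p.2)) :
    Primrec fun p : α × (β ⊕ γ) => f p.1 p.2 := by
  have hinl : Primrec₂ fun (p : α × (β ⊕ γ)) b => f p.1 (.inl b) :=
    hinl.comp (by fun_prop : Primrec fun p : (α × (β ⊕ γ)) × β => (p.1.1, p.2))
  have hinr : Primrec₂ fun (p : α × (β ⊕ γ)) c => f p.1 (.inr c) :=
    hinr.comp (by fun_prop : Primrec fun p : (α × (β ⊕ γ)) × γ => (p.1.1, p.2))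
  refine (Primrec.sumCasesOn Primrec.snd hinl hinr).of_eq ?_
  rintro ⟨a, b | c⟩ <;> rfl

@[fun_prop]
theorem primrec_ruleClauses (hK : Primrec K) (hk : Primrec k) (hN : Primrec N) {r : α → RuleE}
    (hr : Primrec r) : Primrec fun a => ruleClauses (K a) (k a) (N a) (r a) := by
  suffices h : Primrec fun p : α × RuleE => ruleClauses (K p.1) (k p.1) (N p.1) p.2 from
    h.comp (Primrec.id.pair hr)
  refine primrec_of_sum (f := fun a => ruleClauses (K a) (k a) (N a)) ?_
    (primrec_of_sum (f := fun a e => ruleClauses (K a) (k a) (N a) (.inr e)) ?_ ?_)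
  · have h : Primrec fun p : (α × (ℕ × ℕ) × ℕ × List ℕ) × Option ℕ =>
        ruleClauses (K p.1.1) (k p.1.1) (N p.1.1) (.inl (p.1.2.1, p.1.2.2, p.2)) := by
      refine primrec_of_option
        (f := fun (p : α × (ℕ × ℕ) × ℕ × List ℕ) o =>
          ruleClauses (K p.1) (k p.1) (N p.1) (.inl (p.2.1, p.2.2, o))) ?_ ?_ <;>
      · unfold ruleClauses
        fun_prop
    exact h.comp (by fun_prop : Primrec fun p : α × (ℕ × ℕ) × (ℕ × List ℕ) × Option ℕ =>
      ((p.1, p.2.1, p.2.2.1), p.2.2.2))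
  all_goals
    unfold ruleClauses
    fun_prop

@[fun_prop]
theorem primrec_clauses (hK : Primrec K) (hk : Primrec k) (hN : Primrec N) {r : α → List RuleE}
    (hr : Primrec r) : Primrec fun a => clauses (K a) (k a) (N a) (r a) := by
  unfold clauses
  fun_prop

theorem primrecPred_eq {f g : α → β} (hf : Primrec f) (hg : Primrec g) :
    PrimrecPred fun a => f a = g a :=
  open Classical in Primrec.eq.comp hf hg

theorem primrecPred_exists_mem {l : α → List β} {p : α → β → Prop} (hl : Primrec l)
    (hp : PrimrecPred fun x : α × β => p x.1 x.2) : PrimrecPred fun a => ∃ b ∈ l a, p a b :=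
  (PrimrecRel.exists_mem_list (R := fun b a => p a b)
    (hp.comp (Primrec.snd.pair Primrec.fst)).primrecRel).comp hl Primrec.id

theorem primrecPred_forall_mem {l : α → List β} {p : α → β → Prop} (hl : Primrec l)
    (hp : PrimrecPred fun x : α × β => p x.1 x.2) : PrimrecPred fun a => ∀ b ∈ l a, p a b :=
  (PrimrecRel.forall_mem_list (R := fun b a => p a b)
    (hp.comp (Primrec.snd.pair Primrec.fst)).primrecRel).comp hl Primrec.id

theorem primrecPred_mem {f : α → β} {l : α → List β} (hf : Primrec f) (hl : Primrec l) :
    PrimrecPred fun a => f a ∈ l a :=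
  (primrecPred_exists_mem (p := fun a b => f a = b) hl
    (primrecPred_eq (by fun_prop) (by fun_prop))).of_eq fun a => by simp

theorem primrecPred_imp {p q : α → Prop} (hp : PrimrecPred p) (hq : PrimrecPred q) :
    PrimrecPred fun a => p a → q a :=
  (hp.not.or hq).of_eq fun _ => imp_iff_not_or.symm

theorem primrecPred_isModel {H : α → List (List β × β)} {T : α → List β} (hH : Primrec H)
    (hT : Primrec T) : PrimrecPred fun a => IsModel (H a) (T a) := by
  refine primrecPred_forall_mem hH (primrecPred_imp
    (primrecPred_forall_mem (by fun_prop) (primrecPred_mem ?_ ?_)) (primrecPred_mem ?_ ?_)) <;>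
  fun_prop

theorem primrecPred_derives {H : α → List (List β × β)} {f : α → β} (hH : Primrec H)
    (hf : Primrec f) : PrimrecPred fun a => Derives (fun l b => (l, b) ∈ H a) (f a) := by
  refine (primrecPred_forall_mem (l := fun a => listsUpTo ((H a).map Prod.snd) (H a).length)
    (p := fun a T => IsModel (H a) T → f a ∈ T) (by fun_prop)
    (primrecPred_imp (primrecPred_isModel (by fun_prop) (by fun_prop))
      (primrecPred_mem (by fun_prop) (by fun_prop)))).of_eq fun a => ?_
  exact derives_iff_forall_isModel.symm

@[fun_prop]
theorem primrec_count [DecidableEq β] {f : α → β} {l : α → List β} (hf : Primrec f)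
    (hl : Primrec l) : Primrec fun a => (l a).count (f a) :=
  (Primrec.list_length.comp ((PrimrecRel.listFilter Primrec.eq).comp hl hf)).of_eq fun a => by
    rw [List.count_eq_length_filter]
    exact congrArg List.length (List.filter_congr fun b _ => (beq_eq_decide b (f a)).symm)

theorem primrecPred_perm {l l' : α → List β} (hl : Primrec l) (hl' : Primrec l') :
    PrimrecPred fun a => (l a).Perm (l' a) := by
  classical
  refine (primrecPred_forall_mem (l := fun a => l a ++ l' a)
    (p := fun a b => (l a).count b = (l' a).count b) (by fun_prop)
    (primrecPred_eq (by fun_prop) (by fun_prop))).of_eq fun a => ?_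
  rw [List.perm_iff_count]
  refine ⟨fun h b => ?_, fun h b _ => h b⟩
  by_cases hb : b ∈ l a ++ l' a
  · exact h b hb
  · rw [List.mem_append, not_or] at hb
    rw [List.count_eq_zero_of_not_mem hb.1, List.count_eq_zero_of_not_mem hb.2]

theorem primrecPred_isChain {R : β → β → Prop} {l : α → List β}
    (hR : PrimrecPred fun p : β × β => R p.1 p.2) (hl : Primrec l) :
    PrimrecPred fun a => (l a).IsChain R := by
  classical
  have hhead : Primrec fun p : β × Option β => p.2.all fun b => decide (R p.1 b) :=
    primrec_of_option (f := fun b o => o.all fun b' => decide (R b b')) (Primrec.const true)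
      hR.decide
  have hstep : Primrec₂ fun (_ : α) (p : β × List β × Bool) =>
      p.2.1.head?.all (fun b => decide (R p.1 b)) && p.2.2 := by
    refine Primrec.and.comp (hhead.comp (g := fun p : α × β × List β × Bool =>
      (p.2.1, p.2.2.1.head?)) (Primrec.pair ?_ (Primrec.list_head?.comp ?_))) ?_ <;>
    fun_prop
  refine Primrec.primrecPred ((Primrec.list_rec hl (Primrec.const true) hstep).of_eq fun a => ?_)
  induction l a with
  | nil => simp
  | cons b l ih =>
    simp only [ih, List.isChain_cons, Bool.decide_and]
    cases l.head? <;> simp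

theorem primrecPred_schedule {l k : α → ℕ} {q q' : α → β} {J : α → List (Segment β)}
    (hl : Primrec l) (hq : Primrec q) (hJ : Primrec J) (hk : Primrec k) (hq' : Primrec q') :
    PrimrecPred fun a => Schedule (l a) (q a) (J a) (k a) (q' a) := by
  unfold Schedule
  refine primrecPred_isChain ?_ (by fun_prop)
  exact (Primrec.nat_le.comp (by fun_prop) (by fun_prop)).and
    (primrecPred_eq (by fun_prop) (by fun_prop))

end PrimitiveRecursion

section DecisionProcedure

variable {α : Type*} [Primcodable α] {k : α → ℕ} {X : α → Inst}

@[fun_prop]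
theorem primrec_instBound (hX : Primrec X) : Primrec fun a => instBound (X a) :=
  Primrec.succ.comp (Primrec.encode.comp hX)

@[fun_prop]
theorem primrec_lengthBound (hk : Primrec k) (hX : Primrec X) :
    Primrec fun a => lengthBound (k a) (X a) := by
  unfold lengthBound
  fun_prop

@[fun_prop]
theorem primrec_instSegmentLists (hk : Primrec k) (hX : Primrec X) :
    Primrec fun a => instSegmentLists (k a) (X a) := by
  unfold instSegmentLists
  fun_prop

@[fun_prop]
theorem primrec_instClauses (hk : Primrec k) (hX : Primrec X) :
    Primrec fun a => instClauses (k a) (X a) := by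
  unfold instClauses
  fun_prop

@[fun_prop]
theorem primrec_initFact (hX : Primrec X) {I : α → List (Segment ℕ)} (hI : Primrec I) :
    Primrec fun a => initFact (X a) (I a) := by
  unfold initFact
  fun_prop

theorem primrecPred_initFact_derivable :
    PrimrecPred fun p : (ℕ × Inst) × List (Segment ℕ) =>
      ∃ I ∈ instSegmentLists p.1.1 p.1.2, I.Perm p.2 ∧
        Derives (fun l f => (l, f) ∈ instClauses p.1.1 p.1.2) (initFact p.1.2 I) := by
  refine primrecPred_exists_mem
    (p := fun (p : (ℕ × Inst) × List (Segment ℕ)) I => I.Perm p.2 ∧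
      Derives (fun l f => (l, f) ∈ instClauses p.1.1 p.1.2) (initFact p.1.2 I))
    ?_ ((primrecPred_perm ?_ ?_).and (primrecPred_derives ?_ ?_)) <;>
  fun_prop

theorem kStratifiedReachable_iff_derives {k : ℕ} {x : Inst} {q : ℕ} :
    KStratifiedReachable (instDCPS x) k q ↔ ∃ J ∈ instSegmentLists k x,
      Schedule 0 x.2.1.1 J k q ∧ ∃ I ∈ instSegmentLists k x, I.Perm J ∧
        Derives (fun l f => (l, f) ∈ instClauses k x) (initFact x I) := by
  rw [kStratifiedReachable_iff_bounded]
  exact exists_congr fun J => and_congr_right fun hJ =>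
    and_congr_right fun _ => life_iff_derives_clauses hJ

theorem primrecPred_kStratifiedReachable :
    PrimrecPred fun p : (ℕ × Inst) × ℕ =>
      KStratifiedReachable (instDCPS p.1.2) p.1.1 p.2 := by
  refine (primrecPred_exists_mem
    (p := fun (p : (ℕ × Inst) × ℕ) J => Schedule 0 p.1.2.2.1.1 J p.1.1 p.2 ∧
      ∃ I ∈ instSegmentLists p.1.1 p.1.2, I.Perm J ∧
        Derives (fun l f => (l, f) ∈ instClauses p.1.1 p.1.2) (initFact p.1.2 I)) ?_
    ((primrecPred_schedule ?_ ?_ ?_ ?_ ?_).and (primrecPred_initFact_derivable.comp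
      (f := fun p : ((ℕ × Inst) × ℕ) × List (Segment ℕ) => (p.1.1, p.2)) ?_))).of_eq
    fun _ => kStratifiedReachable_iff_derives.symm
  all_goals fun_prop

theorem ssrK_decidable_general :
    PrimrecPred fun p : ℕ × Inst => ∃ q ∈ p.2.2.2, KStratifiedReachable (instDCPS p.2) p.1 q :=
  primrecPred_exists_mem (by fun_prop) primrecPred_kStratifiedReachable

end DecisionProcedure

/-- For every `k`, the `k`-stratified state reachability problem for
DCPSs is decidable: there is an algorithm which, given a DCPS `M` and a target set
`F`, decides whether some `q ∈ F` is `k`-stratified reachable by `M`. -/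
theorem ssrK_decidable (k : ℕ) :
    ComputablePred (fun x : Inst => ∃ q ∈ x.2.2, KStratifiedReachable (instDCPS x) k q) := by
  obtain ⟨_, h⟩ := ssrK_decidable_general.comp ((Primrec.const k).pair Primrec.id)
  exact ⟨_, h.to_comp⟩

end DCPSFormal
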